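/- For each odd prime p and each t ∈ F_p, set a_p(𝓔_t) = p − #{(x,y) ∈ F_p × F_p : y² = x³ + (t³+t)²·x}, and set A_p(𝓔) = (1/p) · Σ_{t ∈ F_p} a_p(𝓔_t). Then lim_{N → ∞} (1/N) · Σ_{odd primes p ≤ N} ( −A_p(𝓔) ) · log p = 1. -/

import Mathlib

open Filter

/-- The average fibral trace of Frobenius `A_p(𝓔)` of the elliptic surface
`𝓔 : y² = x³ + (T³ + T)² x`, where for `t ∈ F_p` the fibral trace is
`a_p(𝓔_t) = p − #{(x,y) ∈ F_p² : y² = x³ + (t³+t)² x}`. -/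
noncomputable def nagaoAverage (p : ℕ) : ℝ :=
  (1 / (p : ℝ)) * ∑ᶠ t : ZMod p,
    ((p : ℝ) - (Nat.card {xy : ZMod p × ZMod p //
      xy.2 ^ 2 = xy.1 ^ 3 + (t ^ 3 + t) ^ 2 * xy.1} : ℝ))

/-!
Since `y² = x³ + (t³ + t)² x` is the quadratic twist of `y² = x³ + x` by `t³ + t`, its trace of
Frobenius is `-χ(t³ + t) S(p)`, where `χ` is the quadratic character and
`S(p) = ∑ₓ χ(x³ + x)` is the Jacobsthal sum. Summing over `t` gives `-A_p(𝓔) = S(p)² / p`.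

If `p ≡ 3 mod 4` then `S(p) = 0`. If `p = a² + b²` with `a` odd then `S(p)² = 4 a²`, so that
`-A_p(𝓔) = 2 + 2 (a² - b²) / p`. The primes `p ≡ 1 mod 4` have density `1 / 2`, so the constant `2`
contributes `1` to the limit. What remains is that the deviations `(a² - b²) / p` cancel on average.
They are the real parts of the values `±(π / |π|)²`, at the primes `π ∣ p`, of an unramified Hecke
character of `ℚ(i)` of infinite order. Its L-function continues holomorphically beyond `Re s = 1`
and has no zero on that line: off the real axis by the `3 + 4 cos θ + cos 2θ` inequality against
the primes `p ≡ 1 mod 4`, and at `s = 1` because its value there is a sum of positive terms. Hence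
the Wiener–Ikehara theorem yields the cancellation.
-/

open Topology MeasureTheory

section Kernel

/-- A real function is band-limited if it is the Fourier integral of a continuous compactly
supported function. Normalised as in `K v = ∫ k(t) exp(itv) dt`. -/
def IsBandLimited (K : ℝ → ℝ) : Prop :=
  ∃ k : ℝ → ℂ, Continuous k ∧ HasCompactSupport k ∧
    ∀ v : ℝ, ∫ t : ℝ, k t * Complex.exp (t * v * Complex.I) = (K v : ℂ)

lemma norm_exp_mul_mul_I (t v : ℝ) : ‖Complex.exp (t * v * Complex.I)‖ = 1 := by
  simpa using Complex.norm_exp_ofReal_mul_I (t * v)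

lemma IsBandLimited.const_mul {K : ℝ → ℝ} (hK : IsBandLimited K) (c : ℝ) :
    IsBandLimited fun v ↦ c * K v := by
  obtain ⟨k, hk, hkc, hkK⟩ := hK
  refine ⟨fun t ↦ c * k t, by fun_prop, hkc.mul_left, fun v ↦ ?_⟩
  simp_rw [mul_assoc (c : ℂ), integral_const_mul, hkK, Complex.ofReal_mul]

lemma IsBandLimited.comp_mul_left {K : ℝ → ℝ} (hK : IsBandLimited K) {l : ℝ} (hl : 0 < l) :
    IsBandLimited fun v ↦ K (l * v) := by
  obtain ⟨k, hk, hkc, hkK⟩ := hK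
  refine ⟨fun t ↦ (l⁻¹ : ℝ) * k (l⁻¹ * t), by fun_prop,
    (hkc.comp_smul (inv_ne_zero hl.ne')).mul_left, fun v ↦ ?_⟩
  have hscale (t : ℝ) : (l⁻¹ : ℝ) * k (l⁻¹ * t) * Complex.exp (t * v * Complex.I) =
      (l⁻¹ : ℝ) * (k (l⁻¹ * t) *
        Complex.exp ((l⁻¹ * t : ℝ) * (l * v : ℝ) * Complex.I)) := by
    have : (l : ℂ) ≠ 0 := mod_cast hl.ne'
    push_cast
    field_simp
  simp_rw [hscale]
  rw [integral_const_mul, Measure.integral_comp_mul_left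
    (fun t : ℝ ↦ k t * Complex.exp (t * (l * v : ℝ) * Complex.I)), hkK, inv_inv, abs_of_pos hl,
    Complex.real_smul, ← mul_assoc, ← Complex.ofReal_mul, inv_mul_cancel₀ hl.ne',
    Complex.ofReal_one, one_mul]

lemma integral_max_zero_one_sub_abs_mul_exp (v : ℝ) :
    ∫ t : ℝ, ((max 0 (1 - |t|) : ℝ) : ℂ) * Complex.exp (t * v * Complex.I) =
      ((∫ t in (0 : ℝ)..1, 2 * (1 - t) * Real.cos (t * v) : ℝ) : ℂ) := by
  have hcont : Continuous fun t : ℝ ↦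
      ((max 0 (1 - |t|) : ℝ) : ℂ) * Complex.exp (t * v * Complex.I) := by fun_prop
  have hcont_neg : Continuous fun t : ℝ ↦
      ((max 0 (1 - |t|) : ℝ) : ℂ) * Complex.exp (-(t * v * Complex.I)) := by fun_prop
  have hsupp : ∫ t : ℝ, ((max 0 (1 - |t|) : ℝ) : ℂ) * Complex.exp (t * v * Complex.I) =
      ∫ t in (-1 : ℝ)..1, ((max 0 (1 - |t|) : ℝ) : ℂ) * Complex.exp (t * v * Complex.I) := by
    rw [intervalIntegral.integral_of_le (by norm_num), ← integral_Icc_eq_integral_Ioc]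
    refine (setIntegral_eq_integral_of_forall_compl_eq_zero fun t ht ↦ ?_).symm
    rw [max_eq_left (by rw [Set.mem_Icc, ← abs_le, not_le] at ht; linarith), Complex.ofReal_zero,
      zero_mul]
  have hreflect : ∫ t in (-1 : ℝ)..0,
        ((max 0 (1 - |t|) : ℝ) : ℂ) * Complex.exp (t * v * Complex.I) =
      ∫ t in (0 : ℝ)..1, ((max 0 (1 - |t|) : ℝ) : ℂ) * Complex.exp (-(t * v * Complex.I)) := by
    have := intervalIntegral.integral_comp_neg (a := 0) (b := 1) fun t : ℝ ↦
      ((max 0 (1 - |t|) : ℝ) : ℂ) * Complex.exp (t * v * Complex.I)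
    simpa [neg_mul] using this.symm
  rw [hsupp, ← intervalIntegral.integral_add_adjacent_intervals (b := 0)
    (hcont.intervalIntegrable _ _) (hcont.intervalIntegrable _ _), hreflect,
    ← intervalIntegral.integral_add (hcont_neg.intervalIntegrable _ _)
      (hcont.intervalIntegrable _ _), ← intervalIntegral.integral_ofReal]
  refine intervalIntegral.integral_congr fun t ht ↦ ?_
  rw [Set.uIcc_of_le zero_le_one] at ht
  rw [abs_of_nonneg ht.1, max_eq_right (by linarith [ht.2])]
  push_cast
  rw [Complex.cos, neg_mul]
  ring

lemma integral_two_mul_one_sub_mul_cos (v : ℝ) :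
    ∫ t in (0 : ℝ)..1, 2 * (1 - t) * Real.cos (t * v) = Real.sinc (v / 2) ^ 2 := by
  rcases eq_or_ne v 0 with rfl | hv
  · simp only [mul_zero, Real.cos_zero, mul_one, zero_div, Real.sinc_zero, one_pow,
      intervalIntegral.integral_const_mul]
    rw [intervalIntegral.integral_sub (by simp) (by simp)]
    norm_num [integral_id]
  · have hderiv (t : ℝ) : HasDerivAt
        (fun t : ℝ ↦ 2 * ((1 - t) * Real.sin (t * v) / v - Real.cos (t * v) / v ^ 2))
        (2 * (1 - t) * Real.cos (t * v)) t := by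
      have hsin := ((hasDerivAt_id t).mul_const v).sin
      have hcos := ((hasDerivAt_id t).mul_const v).cos
      refine ((((((hasDerivAt_id t).const_sub 1).mul hsin).div_const v).sub
        (hcos.div_const (v ^ 2))).const_mul 2).congr_deriv ?_
      simp only [id_eq]
      field_simp
      ring
    have hhalf : Real.cos v = 1 - 2 * Real.sin (v / 2) ^ 2 := by
      rw [Real.sin_sq_eq_half_sub, mul_div_cancel₀ v two_ne_zero]
      ring
    rw [intervalIntegral.integral_eq_sub_of_hasDerivAt (fun t _ ↦ hderiv t)
      (Continuous.intervalIntegrable (by fun_prop) _ _), Real.sinc_of_ne_zero (by simpa using hv)]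
    simp only [sub_self, zero_mul, zero_div, one_mul, zero_sub, Real.sin_zero, Real.cos_zero,
      mul_zero, hhalf]
    field_simp
    ring

lemma isBandLimited_sinc_sq : IsBandLimited fun v ↦ Real.sinc (v / 2) ^ 2 := by
  refine ⟨fun t ↦ ((max 0 (1 - |t|) : ℝ) : ℂ), by fun_prop,
    HasCompactSupport.intro (isCompact_Icc (a := -1) (b := 1)) fun t ht ↦ ?_, fun v ↦ ?_⟩
  · rw [Set.mem_Icc, ← abs_le, not_le] at ht
    rw [max_eq_left (by linarith), Complex.ofReal_zero]
  · rw [integral_max_zero_one_sub_abs_mul_exp, integral_two_mul_one_sub_mul_cos]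

lemma continuous_sinc_sq : Continuous fun v : ℝ ↦ Real.sinc (v / 2) ^ 2 := by
  have := Real.continuous_sinc
  fun_prop

lemma integrable_sinc_sq : Integrable fun v : ℝ ↦ Real.sinc (v / 2) ^ 2 := by
  refine (integrable_inv_one_add_sq.const_mul 8).mono' continuous_sinc_sq.aestronglyMeasurable
    (ae_of_all _ fun v ↦ ?_)
  rw [Real.norm_eq_abs, abs_of_nonneg (sq_nonneg _), ← div_eq_mul_inv, le_div_iff₀ (by positivity)]
  have hle_one : Real.sinc (v / 2) ^ 2 ≤ 1 :=
    (sq_le_one_iff_abs_le_one _).2 (Real.abs_sinc_le_one _)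
  have hle_four : Real.sinc (v / 2) ^ 2 * v ^ 2 ≤ 4 := by
    rcases eq_or_ne v 0 with rfl | hv
    · simp
    · rw [Real.sinc_of_ne_zero (by simpa using hv)]
      have := Real.sin_sq_le_one (v / 2)
      field_simp
      linarith
  linarith

lemma integral_sinc_sq_pos : 0 < ∫ v : ℝ, Real.sinc (v / 2) ^ 2 :=
  integral_pos_of_integrable_nonneg_nonzero (x := 0) continuous_sinc_sq integrable_sinc_sq
    (fun _ ↦ sq_nonneg _) (by simp)

lemma tendsto_setIntegral_Icc_neg_self {J : ℝ → ℝ} (hJ : Integrable J) :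
    Tendsto (fun R : ℝ ↦ ∫ v in Set.Icc (-R) R, J v) atTop (𝓝 (∫ v, J v)) := by
  have hUnion : (⋃ R : ℝ, Set.Icc (-R) R) = Set.univ :=
    Set.eq_univ_of_forall fun z ↦ Set.mem_iUnion.2 ⟨|z|, abs_le.1 le_rfl⟩
  simpa [hUnion] using tendsto_setIntegral_of_monotone (μ := volume) (f := J)
    (s := fun R : ℝ ↦ Set.Icc (-R) R) (fun _ ↦ measurableSet_Icc)
    (fun _ _ hab ↦ Set.Icc_subset_Icc (neg_le_neg hab) hab) hJ.integrableOn

lemma exists_isBandLimited_one_sub_le_setIntegral {ε η : ℝ} (hε : 0 < ε) (hη : 0 < η) :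
    ∃ K : ℝ → ℝ, IsBandLimited K ∧ (∀ v, 0 ≤ K v) ∧ Integrable K ∧ ∫ v, K v = 1 ∧
      1 - ε ≤ ∫ v in Set.Icc (-η) η, K v := by
  set J : ℝ → ℝ := fun v ↦ Real.sinc (v / 2) ^ 2
  set c := ∫ v, J v
  have hc : 0 < c := integral_sinc_sq_pos
  have hlt : (1 - ε) * c < c := by nlinarith
  obtain ⟨R, hR, hR_pos⟩ :=
    (((tendsto_setIntegral_Icc_neg_self integrable_sinc_sq).eventually_const_lt hlt).and
      (eventually_gt_atTop 0)).exists
  set l := R / η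
  have hl : 0 < l := div_pos hR_pos hη
  have hlη : l * η = R := div_mul_cancel₀ R hη.ne'
  refine ⟨fun v ↦ (c⁻¹ * l) * J (l * v), (isBandLimited_sinc_sq.comp_mul_left hl).const_mul _,
    fun v ↦ by positivity, (integrable_sinc_sq.comp_mul_left' hl.ne').const_mul _, ?_, ?_⟩
  · rw [integral_const_mul, Measure.integral_comp_mul_left, abs_of_pos (inv_pos.2 hl), smul_eq_mul,
      mul_assoc, mul_inv_cancel_left₀ hl.ne', inv_mul_cancel₀ hc.ne']
  · rw [integral_const_mul, integral_Icc_eq_integral_Ioc,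
      ← intervalIntegral.integral_of_le (by linarith),
      intervalIntegral.integral_comp_mul_left _ hl.ne', smul_eq_mul, mul_neg, hlη,
      intervalIntegral.integral_of_le (by linarith),
      ← integral_Icc_eq_integral_Ioc, mul_assoc, mul_inv_cancel_left₀ hl.ne', inv_mul_eq_div,
      le_div_iff₀ hc]
    exact hR.le

end Kernel

section Tauberian

lemma integral_mul_integral_mul_exp {g k : ℝ → ℂ} (hg : Integrable g) (hk : Integrable k) (x : ℝ) :
    ∫ u, g u * ∫ t, k t * Complex.exp (t * (x - u : ℝ) * Complex.I) =
      ∫ t, k t * Complex.exp (t * x * Complex.I) *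
        ∫ u, g u * Complex.exp (-(t * u * Complex.I)) := by
  have hswap : Integrable (Function.uncurry fun u t : ℝ ↦
      g u * (k t * Complex.exp (t * (x - u : ℝ) * Complex.I))) (volume.prod volume) := by
    simp only [← mul_assoc]
    refine (hg.mul_prod hk).mul_bdd (c := 1) (by fun_prop) (ae_of_all _ fun z ↦ ?_)
    exact (norm_exp_mul_mul_I _ _).le
  simp_rw [← integral_const_mul]
  rw [integral_integral_swap hswap]
  congr with t
  congr with u
  have hexp : Complex.exp (t * (x - u : ℝ) * Complex.I) =
      Complex.exp (t * x * Complex.I) * Complex.exp (-(t * u * Complex.I)) := by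
    rw [← Complex.exp_add]
    push_cast
    ring_nf
  rw [hexp]
  ring

lemma tendsto_integral_mul_exp_mul_mul_I (f : ℝ → ℂ) :
    Tendsto (fun x : ℝ ↦ ∫ t : ℝ, f t * Complex.exp (t * x * Complex.I)) atTop (𝓝 0) := by
  have hscale : Tendsto (fun x : ℝ ↦ -x / (2 * Real.pi)) atTop (cocompact ℝ) :=
    (tendsto_neg_atTop_atBot.atBot_div_const (by positivity)).mono_right atBot_le_cocompact
  refine ((Real.tendsto_integral_exp_smul_cocompact f).comp hscale).congr fun x ↦ ?_
  simp only [Function.comp_apply]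
  congr! 2 with t
  rw [Circle.smul_def, Real.fourierChar_apply, smul_eq_mul, mul_comm]
  congr 3
  have : (Real.pi : ℂ) ≠ 0 := mod_cast Real.pi_ne_zero
  push_cast
  field_simp

lemma tendsto_integral_mul_exp_neg_mul {F : ℝ → ℂ} (hF : Integrable F) (hF0 : ∀ u ≤ 0, F u = 0) :
    Tendsto (fun δ : ℝ ↦ ∫ u : ℝ, F u * Real.exp (-δ * u)) (𝓝[>] 0) (𝓝 (∫ u, F u)) := by
  refine tendsto_integral_filter_of_dominated_convergence (fun u ↦ ‖F u‖)
    (Eventually.of_forall fun δ ↦ hF.aestronglyMeasurable.mul (by fun_prop)) ?_ hF.norm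
    (ae_of_all _ fun u ↦ ?_)
  · filter_upwards [self_mem_nhdsWithin] with δ hδ
    refine ae_of_all _ fun u ↦ ?_
    rcases le_or_gt u 0 with hu | hu
    · simp [hF0 u hu]
    · rw [norm_mul, Complex.norm_real, Real.norm_eq_abs, Real.abs_exp]
      have := mul_pos (Set.mem_Ioi.1 hδ) hu
      exact mul_le_of_le_one_right (norm_nonneg _) (Real.exp_le_one_iff.2 (by linarith))
  · have hcont : Continuous fun δ : ℝ ↦ F u * Real.exp (-δ * u) := by fun_prop
    simpa using (hcont.tendsto 0).mono_left (nhdsWithin_le_nhds (s := Set.Ioi 0))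

lemma tendsto_integral_mul_comp_add_mul_I {k : ℝ → ℂ} (hk : Continuous k)
    (hkc : HasCompactSupport k) {h : ℂ → ℂ} (hh : ContinuousOn h {s | 0 ≤ s.re}) :
    Tendsto (fun δ : ℝ ↦ ∫ t : ℝ, k t * h (δ + t * Complex.I)) (𝓝[>] 0)
      (𝓝 (∫ t : ℝ, k t * h (t * Complex.I))) := by
  have hcompact : IsCompact ((fun z : ℝ × ℝ ↦ (z.1 : ℂ) + z.2 * Complex.I) ''
      (Set.Icc 0 1 ×ˢ tsupport k)) := (isCompact_Icc.prod hkc).image (by fun_prop)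
  obtain ⟨D, hD⟩ := hcompact.exists_bound_of_continuousOn (f := h) (hh.mono (by
    rintro _ ⟨z, hz, rfl⟩
    simpa using hz.1.1))
  refine tendsto_integral_filter_of_dominated_convergence (fun t ↦ ‖k t‖ * D) ?_ ?_
    ((hk.integrable_of_hasCompactSupport hkc).norm.mul_const D) (ae_of_all _ fun t ↦ ?_)
  · filter_upwards [self_mem_nhdsWithin] with δ hδ
    refine (hk.mul (hh.comp_continuous (by fun_prop) fun t ↦ ?_)).aestronglyMeasurable
    simpa using hδ.le
  · filter_upwards [Ioo_mem_nhdsGT (zero_lt_one' ℝ)] with δ hδ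
    refine ae_of_all _ fun t ↦ ?_
    rw [norm_mul]
    by_cases ht : t ∈ tsupport k
    · exact mul_le_mul_of_nonneg_left (hD _ ⟨(δ, t), ⟨⟨hδ.1.le, hδ.2.le⟩, ht⟩, rfl⟩) (norm_nonneg _)
    · simp [image_eq_zero_of_notMem_tsupport ht]
  · have hcont : ContinuousOn (fun δ : ℝ ↦ h (δ + t * Complex.I)) (Set.Ici 0) :=
      hh.comp (by fun_prop) fun δ hδ ↦ by simpa using hδ
    simpa using ((hcont 0 Set.self_mem_Ici).tendsto.mono_left
      (nhdsWithin_mono 0 Set.Ioi_subset_Ici_self)).const_mul (k t)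

lemma integrable_mul_exp_neg_mul {B : ℝ → ℂ} (hB : Measurable B) {M : ℝ} (hBM : ∀ u, ‖B u‖ ≤ M)
    (hB0 : ∀ u ≤ 0, B u = 0) {δ : ℝ} (hδ : 0 < δ) :
    Integrable fun u : ℝ ↦ B u * Real.exp (-δ * u) := by
  have hpos : IntegrableOn (fun u : ℝ ↦ B u * Real.exp (-δ * u)) (Set.Ioi 0) := by
    refine ((integrableOn_exp_mul_Ioi (neg_lt_zero.2 hδ) 0).const_mul M).mono' (by fun_prop)
      (ae_of_all _ fun u ↦ ?_)
    rw [norm_mul, Complex.norm_real, Real.norm_eq_abs, Real.abs_exp]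
    exact mul_le_mul_of_nonneg_right (hBM u) (Real.exp_pos _).le
  refine (integrableOn_iff_integrable_of_support_subset fun u hu ↦ ?_).1 hpos
  exact Set.mem_Ioi.2 (not_le.1 fun h ↦ hu (by simp [hB0 u h]))

lemma tendsto_integral_mul_isBandLimited {B : ℝ → ℂ} (hB : Measurable B) {M : ℝ}
    (hBM : ∀ u, ‖B u‖ ≤ M) (hB0 : ∀ u ≤ 0, B u = 0)
    {h : ℂ → ℂ} (hh : ContinuousOn h {s | 0 ≤ s.re})
    (hBh : ∀ s : ℂ, 0 < s.re → ∫ u : ℝ, B u * Complex.exp (-s * u) = h s)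
    {K : ℝ → ℝ} (hK : Integrable K) (hKb : IsBandLimited K) :
    Tendsto (fun x : ℝ ↦ ∫ u : ℝ, B u * K (x - u)) atTop (𝓝 0) := by
  obtain ⟨k, hk, hkc, hkK⟩ := hKb
  have hki : Integrable k := hk.integrable_of_hasCompactSupport hkc
  have hfubini (x δ : ℝ) (hδ : 0 < δ) : ∫ u : ℝ, B u * K (x - u) * Real.exp (-δ * u) =
      ∫ t : ℝ, k t * Complex.exp (t * x * Complex.I) * h (δ + t * Complex.I) := by
    have := integral_mul_integral_mul_exp (integrable_mul_exp_neg_mul hB hBM hB0 hδ) hki x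
    simp_rw [hkK] at this
    simp_rw [fun u : ℝ ↦ mul_right_comm (B u) (K (x - u) : ℂ)]
    rw [this]
    congr! 3 with t
    rw [← hBh _ (by simpa using hδ)]
    congr! 2 with u
    rw [mul_assoc, Complex.ofReal_exp, ← Complex.exp_add]
    push_cast
    ring_nf
  have hlimit (x : ℝ) : ∫ u : ℝ, B u * K (x - u) =
      ∫ t : ℝ, k t * h (t * Complex.I) * Complex.exp (t * x * Complex.I) := by
    have hBK : Integrable fun u : ℝ ↦ B u * K (x - u) :=
      (hK.comp_sub_left x).ofReal.bdd_mul hB.aestronglyMeasurable (ae_of_all _ hBM)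
    refine tendsto_nhds_unique
      (tendsto_integral_mul_exp_neg_mul hBK fun u hu ↦ by simp [hB0 u hu]) ?_
    simp_rw [fun t : ℝ ↦ mul_right_comm (k t) (h (t * Complex.I))]
    refine (tendsto_integral_mul_comp_add_mul_I (k := fun t ↦ k t * Complex.exp (t * x * Complex.I))
      (by fun_prop) hkc.mul_right hh).congr' ?_
    filter_upwards [self_mem_nhdsWithin] with δ hδ using (hfubini x δ hδ).symm
  exact (tendsto_integral_mul_exp_mul_mul_I _).congr fun x ↦ (hlimit x).symm

section SlowlyDecreasing

variable {φ K : ℝ → ℝ} {M : ℝ}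

lemma integrable_comp_sub_left_mul (hm : Measurable φ) (h0 : ∀ u, 0 ≤ φ u) (hM : ∀ u, φ u ≤ M)
    (hK : Integrable K) (x : ℝ) : Integrable fun v ↦ φ (x - v) * K v :=
  hK.bdd_mul (c := M) (hm.comp (measurable_const.sub measurable_id)).aestronglyMeasurable
    (ae_of_all _ fun v ↦ by simpa [abs_of_nonneg (h0 _)] using hM _)

lemma mul_exp_neg_sub_le (hmono : Monotone fun u ↦ φ u * Real.exp u) {u w : ℝ} (huw : u ≤ w) :
    φ u * Real.exp (-(w - u)) ≤ φ w := by
  rw [neg_sub, Real.exp_sub, ← mul_div_assoc, div_le_iff₀ (Real.exp_pos _)]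
  exact hmono huw

lemma mul_setIntegral_Icc_le_integral (hm : Measurable φ) (h0 : ∀ u, 0 ≤ φ u) (hM : ∀ u, φ u ≤ M)
    (hmono : Monotone fun u ↦ φ u * Real.exp u) (hK : Integrable K) (hK0 : ∀ v, 0 ≤ K v)
    (η y : ℝ) : φ y * Real.exp (-(2 * η)) * ∫ v in Set.Icc (-η) η, K v ≤
      ∫ v, φ (y + η - v) * K v := by
  have hint := integrable_comp_sub_left_mul hm h0 hM hK (y + η)
  rw [← integral_const_mul]
  refine (setIntegral_mono_on (hK.const_mul _).integrableOn hint.integrableOn measurableSet_Icc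
    fun v hv ↦ mul_le_mul_of_nonneg_right ?_ (hK0 v)).trans
      (setIntegral_le_integral hint (ae_of_all _ fun v ↦ mul_nonneg (h0 _) (hK0 v)))
  calc φ y * Real.exp (-(2 * η)) ≤ φ y * Real.exp (-(y + η - v - y)) :=
        mul_le_mul_of_nonneg_left (Real.exp_le_exp.2 (by linarith [hv.1])) (h0 y)
    _ ≤ φ (y + η - v) := mul_exp_neg_sub_le hmono (by linarith [hv.2])

lemma integral_le_mul_setIntegral_Icc_add (hm : Measurable φ) (h0 : ∀ u, 0 ≤ φ u)
    (hM : ∀ u, φ u ≤ M) (hmono : Monotone fun u ↦ φ u * Real.exp u) (hK : Integrable K)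
    (hK0 : ∀ v, 0 ≤ K v) (η y : ℝ) : ∫ v, φ (y - η - v) * K v ≤
      φ y * Real.exp (2 * η) * (∫ v in Set.Icc (-η) η, K v) +
        M * ∫ v in (Set.Icc (-η) η)ᶜ, K v := by
  have hint := integrable_comp_sub_left_mul hm h0 hM hK (y - η)
  rw [← integral_add_compl (measurableSet_Icc (a := -η) (b := η)) hint, ← integral_const_mul,
    ← integral_const_mul]
  refine add_le_add
    (setIntegral_mono_on hint.integrableOn (hK.const_mul _).integrableOn measurableSet_Icc
      fun v hv ↦ mul_le_mul_of_nonneg_right ?_ (hK0 v))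
    (setIntegral_mono_on hint.integrableOn (hK.const_mul _).integrableOn measurableSet_Icc.compl
      fun v _ ↦ mul_le_mul_of_nonneg_right (hM _) (hK0 v))
  have hle := mul_exp_neg_sub_le hmono (show y - η - v ≤ y by linarith [hv.1])
  rw [Real.exp_neg, ← div_eq_mul_inv, div_le_iff₀ (Real.exp_pos _)] at hle
  exact hle.trans (mul_le_mul_of_nonneg_left (Real.exp_le_exp.2 (by linarith [hv.2])) (h0 y))

lemma eventually_mul_exp_le_and_le {A ε : ℝ} (hm : Measurable φ) (h0 : ∀ u, 0 ≤ φ u)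
    (hM : ∀ u, φ u ≤ M) (hmono : Monotone fun u ↦ φ u * Real.exp u) (hK : Integrable K)
    (hK0 : ∀ v, 0 ≤ K v) (hK1 : ∫ v, K v = 1) (hKε : 1 - ε ≤ ∫ v in Set.Icc (-ε) ε, K v)
    (hlim : Tendsto (fun x ↦ ∫ v, φ (x - v) * K v) atTop (𝓝 A)) (hε : 0 < ε) :
    ∀ᶠ y in atTop, φ y * Real.exp (-(2 * ε)) * (1 - ε) ≤ A + ε ∧
      A - ε ≤ φ y * Real.exp (2 * ε) + M * ε := by
  have hupper : ∀ᶠ y in atTop, ∫ v, φ (y + ε - v) * K v < A + ε :=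
    (hlim.comp (tendsto_atTop_add_const_right _ ε tendsto_id)).eventually_lt_const (by linarith)
  have hlower : ∀ᶠ y in atTop, A - ε < ∫ v, φ (y - ε - v) * K v :=
    (hlim.comp (tendsto_atTop_add_const_right _ (-ε) tendsto_id)).eventually_const_lt (by linarith)
  have hsplit := integral_add_compl (measurableSet_Icc (a := -ε) (b := ε)) hK
  have hcompl : 0 ≤ ∫ v in (Set.Icc (-ε) ε)ᶜ, K v := integral_nonneg hK0
  filter_upwards [hupper, hlower] with y hy_upper hy_lower
  constructor
  · refine le_trans ?_ ((mul_setIntegral_Icc_le_integral hm h0 hM hmono hK hK0 ε y).trans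
      hy_upper.le)
    exact mul_le_mul_of_nonneg_left hKε (mul_nonneg (h0 y) (Real.exp_pos _).le)
  · refine hy_lower.le.trans ((integral_le_mul_setIntegral_Icc_add hm h0 hM hmono hK hK0 ε y).trans
      (add_le_add ?_ ?_))
    · exact mul_le_of_le_one_right (mul_nonneg (h0 y) (Real.exp_pos _).le) (by linarith)
    · exact mul_le_mul_of_nonneg_left (by linarith) ((h0 0).trans (hM 0))

lemma tendsto_of_tendsto_integral_comp_sub_mul {A : ℝ} (hm : Measurable φ) (h0 : ∀ u, 0 ≤ φ u)
    (hM : ∀ u, φ u ≤ M) (hmono : Monotone fun u ↦ φ u * Real.exp u)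
    (hK : ∀ ε > 0, ∃ K : ℝ → ℝ, (∀ v, 0 ≤ K v) ∧ Integrable K ∧ ∫ v, K v = 1 ∧
      1 - ε ≤ ∫ v in Set.Icc (-ε) ε, K v ∧
      Tendsto (fun x ↦ ∫ v, φ (x - v) * K v) atTop (𝓝 A)) :
    Tendsto φ atTop (𝓝 A) := by
  have hbound (ε : ℝ) (hε : 0 < ε) : ∀ᶠ y in atTop,
      φ y * Real.exp (-(2 * ε)) * (1 - ε) ≤ A + ε ∧ A - ε ≤ φ y * Real.exp (2 * ε) + M * ε := by
    obtain ⟨K, hK0, hKi, hK1, hKε, hlim⟩ := hK ε hε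
    exact eventually_mul_exp_le_and_le hm h0 hM hmono hKi hK0 hK1 hKε hlim hε
  refine tendsto_order.2 ⟨fun a ha ↦ ?_, fun a ha ↦ ?_⟩
  · have hcont : Continuous fun ε : ℝ ↦ (A - ε - M * ε) * Real.exp (-(2 * ε)) := by fun_prop
    have hlim := (hcont.tendsto 0).mono_left (nhdsWithin_le_nhds (s := Set.Ioi 0))
    obtain ⟨ε, haε, hε⟩ :=
      ((hlim.eventually_const_lt (by simpa using ha)).and self_mem_nhdsWithin).exists
    filter_upwards [hbound ε hε] with y hy
    refine haε.trans_le ?_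
    rw [Real.exp_neg, ← div_eq_mul_inv, div_le_iff₀ (Real.exp_pos _)]
    linarith [hy.2]
  · have hcont : ContinuousAt (fun ε : ℝ ↦ (A + ε) * Real.exp (2 * ε) / (1 - ε)) 0 :=
      ContinuousAt.div (by fun_prop) (by fun_prop) (by norm_num)
    have hlim := hcont.tendsto.mono_left (nhdsWithin_le_nhds (s := Set.Ioi 0))
    obtain ⟨ε, haε, hε⟩ := ((hlim.eventually_lt_const (by simpa using ha)).and
      (Ioo_mem_nhdsGT (zero_lt_one' ℝ))).exists
    filter_upwards [hbound ε hε.1] with y hy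
    refine lt_of_le_of_lt ?_ haε
    rw [le_div_iff₀ (by linarith [hε.2]), ← div_le_iff₀ (Real.exp_pos _), div_eq_mul_inv,
      ← Real.exp_neg]
    linarith [hy.1]

end SlowlyDecreasing

end Tauberian

section WienerIkehara

/-- The normalised summatory function `x⁻¹ ∑_{n ≤ x} f n` in the logarithmic variable `x = exp u`,
in which the Laplace transform of its deviation from the residue is an L-series. -/
noncomputable def logMean (f : ℕ → ℝ) (u : ℝ) : ℝ :=
  (∑ n ∈ Finset.Icc 1 ⌊Real.exp u⌋₊, f n) * Real.exp (-u)

variable {f : ℕ → ℝ} {C : ℝ}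

lemma logMean_mul_exp (f : ℕ → ℝ) (u : ℝ) :
    logMean f u * Real.exp u = ∑ n ∈ Finset.Icc 1 ⌊Real.exp u⌋₊, f n := by
  rw [logMean, mul_assoc, ← Real.exp_add, neg_add_cancel, Real.exp_zero, mul_one]

lemma logMean_log_natCast (f : ℕ → ℝ) {N : ℕ} (hN : 0 < N) :
    logMean f (Real.log N) = (∑ n ∈ Finset.Icc 1 N, f n) / N := by
  rw [logMean, Real.exp_neg, Real.exp_log (by exact_mod_cast hN), Nat.floor_natCast, div_eq_mul_inv]

lemma logMean_of_neg (f : ℕ → ℝ) {u : ℝ} (hu : u < 0) : logMean f u = 0 := by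
  have : ⌊Real.exp u⌋₊ = 0 := Nat.floor_eq_zero.2 (by simpa using hu)
  simp [logMean, this]

lemma monotone_logMean_mul_exp (hf : ∀ n, 0 ≤ f n) :
    Monotone fun u ↦ logMean f u * Real.exp u := by
  intro u w huw
  simp only [logMean_mul_exp]
  exact Finset.sum_le_sum_of_subset_of_nonneg
    (Finset.Icc_subset_Icc_right (Nat.floor_mono (Real.exp_le_exp.2 huw))) fun n _ _ ↦ hf n

lemma measurable_logMean (hf : ∀ n, 0 ≤ f n) : Measurable (logMean f) := by
  have hmeas := (monotone_logMean_mul_exp hf).measurable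
  simp only [logMean_mul_exp] at hmeas
  exact hmeas.mul (by fun_prop)

lemma logMean_nonneg (hf : ∀ n, 0 ≤ f n) (u : ℝ) : 0 ≤ logMean f u :=
  mul_nonneg (Finset.sum_nonneg fun n _ ↦ hf n) (Real.exp_pos _).le

lemma nonneg_of_forall_sum_Icc_le (hf : ∀ n, 0 ≤ f n)
    (hC : ∀ N : ℕ, ∑ n ∈ Finset.Icc 1 N, f n ≤ C * N) : 0 ≤ C := by
  simpa using (hf 1).trans (by simpa using hC 1)

lemma logMean_le (hf : ∀ n, 0 ≤ f n) (hC : ∀ N : ℕ, ∑ n ∈ Finset.Icc 1 N, f n ≤ C * N) (u : ℝ) :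
    logMean f u ≤ C := by
  rw [logMean, Real.exp_neg, ← div_eq_mul_inv, div_le_iff₀ (Real.exp_pos u)]
  exact (hC _).trans (mul_le_mul_of_nonneg_left (Nat.floor_le (Real.exp_pos u).le)
    (nonneg_of_forall_sum_Icc_le hf hC))

lemma LSeries_one_add_eq_mul_integral_logMean (hf : ∀ n, 0 ≤ f n)
    (hC : ∀ N : ℕ, ∑ n ∈ Finset.Icc 1 N, f n ≤ C * N) {s : ℂ} (hs : 0 < s.re) :
    LSeries (fun n ↦ (f n : ℂ)) (1 + s) =
      (1 + s) * ∫ u in Set.Ioi (0 : ℝ), (logMean f u : ℂ) * Complex.exp (-s * u) := by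
  have hO : (fun n : ℕ ↦ ∑ k ∈ Finset.Icc 1 n, f k) =O[atTop] fun n : ℕ ↦ (n : ℝ) ^ (1 : ℝ) := by
    refine Asymptotics.IsBigO.of_bound C (Eventually.of_forall fun n ↦ ?_)
    rw [Real.norm_eq_abs, abs_of_nonneg (Finset.sum_nonneg fun n _ ↦ hf n)]
    simpa using hC n
  rw [LSeries_eq_mul_integral_of_nonneg f zero_le_one (by simpa using hs) hO hf, ← Real.exp_zero,
    ← integral_comp_exp_Ioi]
  congr 1
  refine setIntegral_congr_fun measurableSet_Ioi fun u _ ↦ ?_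
  rw [Complex.real_smul, Complex.cpow_def_of_ne_zero (mod_cast (Real.exp_pos u).ne'),
    ← Complex.ofReal_log (Real.exp_pos u).le, Real.log_exp, logMean, mul_left_comm]
  push_cast
  rw [mul_assoc, ← Complex.exp_add, ← Complex.exp_add]
  ring_nf

lemma integral_indicator_logMean_sub_mul_exp (hf : ∀ n, 0 ≤ f n)
    (hC : ∀ N : ℕ, ∑ n ∈ Finset.Icc 1 N, f n ≤ C * N) (A : ℝ) {s : ℂ} (hs : 0 < s.re) :
    ∫ u : ℝ, (Set.Ioi 0).indicator (fun u ↦ ((logMean f u - A : ℝ) : ℂ)) u * Complex.exp (-s * u) =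
      LSeries (fun n ↦ (f n : ℂ)) (1 + s) / (1 + s) - A / s := by
  have hs_neg : (-s).re < 0 := by simpa using hs
  have hs_add : 1 + s ≠ 0 := fun h ↦ by
    have := congrArg Complex.re h
    simp only [Complex.add_re, Complex.one_re, Complex.zero_re] at this
    linarith
  have hexp : IntegrableOn (fun u : ℝ ↦ Complex.exp (-s * u)) (Set.Ioi 0) :=
    integrableOn_exp_mul_complex_Ioi hs_neg 0
  have hmean : IntegrableOn (fun u : ℝ ↦ (logMean f u : ℂ) * Complex.exp (-s * u)) (Set.Ioi 0) :=
    hexp.bdd_mul (c := C) (Complex.measurable_ofReal.comp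
      (measurable_logMean hf)).aestronglyMeasurable (ae_of_all _ fun u ↦ by
        simpa [abs_of_nonneg (logMean_nonneg hf u)] using logMean_le hf hC u)
  simp_rw [← Set.indicator_mul_left (Set.Ioi (0 : ℝ)) (fun u ↦ ((logMean f u - A : ℝ) : ℂ))
    fun u : ℝ ↦ Complex.exp (-s * u)]
  rw [integral_indicator measurableSet_Ioi, LSeries_one_add_eq_mul_integral_logMean hf hC hs,
    mul_div_cancel_left₀ _ hs_add]
  simp_rw [Complex.ofReal_sub, sub_mul]
  rw [integral_sub hmean (hexp.const_mul _), integral_const_mul,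
    integral_exp_mul_complex_Ioi hs_neg]
  simp [div_eq_mul_inv]

lemma tendsto_integral_indicator_logMean_sub_mul (hf : ∀ n, 0 ≤ f n)
    (hC : ∀ N : ℕ, ∑ n ∈ Finset.Icc 1 N, f n ≤ C * N) {A : ℝ} {H : ℂ → ℂ}
    (hH : ContinuousOn H {s | 1 ≤ s.re})
    (hfH : ∀ s : ℂ, 1 < s.re → LSeries (fun n ↦ (f n : ℂ)) s = A / (s - 1) + H s)
    {K : ℝ → ℝ} (hK : Integrable K) (hKb : IsBandLimited K) :
    Tendsto (fun x : ℝ ↦ ∫ u : ℝ,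
      (Set.Ioi 0).indicator (fun u ↦ ((logMean f u - A : ℝ) : ℂ)) u * K (x - u)) atTop (𝓝 0) := by
  have hre {s : ℂ} (hs : 0 ≤ s.re) : 1 + s ≠ 0 := fun h ↦ by
    have := congrArg Complex.re h
    simp only [Complex.add_re, Complex.one_re, Complex.zero_re] at this
    linarith
  refine tendsto_integral_mul_isBandLimited (M := C + |A|) ?_ (fun u ↦ ?_) (fun u hu ↦ ?_)
    (h := fun s ↦ (H (1 + s) - A) / (1 + s)) ?_ (fun s hs ↦ ?_) hK hKb
  · exact (Complex.measurable_ofReal.comp ((measurable_logMean hf).sub_const A)).indicator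
      measurableSet_Ioi
  · refine (norm_indicator_le_norm_self _ _).trans ?_
    rw [Complex.norm_real, Real.norm_eq_abs]
    refine (abs_sub _ _).trans ?_
    rw [abs_of_nonneg (logMean_nonneg hf u)]
    gcongr
    exact logMean_le hf hC u
  · simp [hu]
  · refine ((hH.comp (by fun_prop) fun s hs ↦ ?_).sub continuousOn_const).div (by fun_prop)
      fun s hs ↦ hre hs
    simpa using hs
  · have hs_ne : s ≠ 0 := fun h ↦ by simp [h] at hs
    rw [integral_indicator_logMean_sub_mul_exp hf hC A hs, hfH _ (by simpa using hs)]
    have := hre hs.le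
    rw [add_sub_cancel_left]
    field_simp
    ring

lemma tendsto_integral_logMean_comp_sub_mul (hf : ∀ n, 0 ≤ f n)
    (hC : ∀ N : ℕ, ∑ n ∈ Finset.Icc 1 N, f n ≤ C * N) {A : ℝ} {H : ℂ → ℂ}
    (hH : ContinuousOn H {s | 1 ≤ s.re})
    (hfH : ∀ s : ℂ, 1 < s.re → LSeries (fun n ↦ (f n : ℂ)) s = A / (s - 1) + H s)
    {K : ℝ → ℝ} (hK : Integrable K) (hKb : IsBandLimited K) (hK1 : ∫ v, K v = 1) :
    Tendsto (fun x ↦ ∫ v, logMean f (x - v) * K v) atTop (𝓝 A) := by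
  have hmass : Tendsto (fun x ↦ ∫ v in Set.Iio x, K v) atTop (𝓝 1) := by
    simpa [Set.iUnion_Iio, hK1] using tendsto_setIntegral_of_monotone (μ := volume) (f := K)
      (s := fun x : ℝ ↦ Set.Iio x) (fun _ ↦ measurableSet_Iio)
      (fun _ _ hab ↦ Set.Iio_subset_Iio hab) hK.integrableOn
  have hdev := (Complex.continuous_re.tendsto 0).comp
    (tendsto_integral_indicator_logMean_sub_mul hf hC hH hfH hK hKb)
  have hsum := hdev.add (hmass.const_mul A)
  simp only [Complex.zero_re, zero_add, mul_one] at hsum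
  refine hsum.congr fun x ↦ ?_
  have hcut : ∀ᵐ v : ℝ, (Set.Ioi 0).indicator (fun u ↦ logMean f u - A) (x - v) * K v =
      logMean f (x - v) * K v - A * (Set.Iio x).indicator K v := by
    filter_upwards [compl_mem_ae_iff.2 (measure_singleton (μ := volume) x)] with v hv
    rcases lt_or_gt_of_ne (show v ≠ x from hv) with h | h
    · simp [h, sub_mul]
    · simp [h.le, logMean_of_neg f (sub_neg.2 h)]
  have hmean : Integrable fun v ↦ logMean f (x - v) * K v :=
    integrable_comp_sub_left_mul (measurable_logMean hf) (logMean_nonneg hf) (logMean_le hf hC) hK x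
  have hshift : (∫ u : ℝ,
      (Set.Ioi 0).indicator (fun u ↦ ((logMean f u - A : ℝ) : ℂ)) u * K (x - u)) =
      ((∫ v, (Set.Ioi 0).indicator (fun u ↦ logMean f u - A) (x - v) * K v : ℝ) : ℂ) := by
    rw [← integral_complex_ofReal, ← integral_sub_left_eq_self _ volume x]
    congr 1 with v
    by_cases h : v < x <;> simp [h]
  rw [Function.comp_apply, hshift, Complex.ofReal_re, integral_congr_ae hcut,
    integral_sub hmean ((hK.indicator measurableSet_Iio).const_mul A), integral_const_mul,
    integral_indicator measurableSet_Iio, sub_add_cancel]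

/-- **Wiener–Ikehara theorem**. -/
theorem tendsto_sum_div_of_LSeries_eq (hf : ∀ n, 0 ≤ f n)
    (hC : ∀ N : ℕ, ∑ n ∈ Finset.Icc 1 N, f n ≤ C * N) {A : ℝ} {H : ℂ → ℂ}
    (hH : ContinuousOn H {s | 1 ≤ s.re})
    (hfH : ∀ s : ℂ, 1 < s.re → LSeries (fun n ↦ (f n : ℂ)) s = A / (s - 1) + H s) :
    Tendsto (fun N : ℕ ↦ (∑ n ∈ Finset.Icc 1 N, f n) / N) atTop (𝓝 A) := by
  have hlim : Tendsto (logMean f) atTop (𝓝 A) :=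
    tendsto_of_tendsto_integral_comp_sub_mul (measurable_logMean hf) (logMean_nonneg hf)
      (logMean_le hf hC) (monotone_logMean_mul_exp hf) fun ε hε ↦ by
        obtain ⟨K, hKb, hK0, hK, hK1, hKε⟩ := exists_isBandLimited_one_sub_le_setIntegral hε hε
        exact ⟨K, hK0, hK, hK1, hKε,
          tendsto_integral_logMean_comp_sub_mul hf hC hH hfH hK hKb hK1⟩
  refine (hlim.comp (Real.tendsto_log_atTop.comp tendsto_natCast_atTop_atTop)).congr' ?_
  filter_upwards [eventually_gt_atTop 0] with N hN using logMean_log_natCast f hN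

end WienerIkehara

section Jacobsthal

variable {F : Type*} [Field F]

lemma ne_neg_self_of_ringChar_ne_two (hF : ringChar F ≠ 2) {x : F} (hx : x ≠ 0) : x ≠ -x :=
  fun h ↦ hx ((Ring.eq_self_iff_eq_zero_of_char_ne_two hF).1 h.symm)

variable [Fintype F]

lemma ringChar_ne_two_of_card_mod_four (hF : Fintype.card F % 4 = 1) : ringChar F ≠ 2 := fun h ↦ by
  have := FiniteField.even_card_of_char_two h
  omega

variable [DecidableEq F]

/-- The Jacobsthal sum of `k`, that is, minus the trace of Frobenius of `y² = x³ + k x`. -/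
def jacobsthalSum (k : F) : ℤ := ∑ x : F, quadraticChar F (x ^ 3 + k * x)

lemma quadraticChar_sq_mul {m : F} (hm : m ≠ 0) (x : F) :
    quadraticChar F (m ^ 2 * x) = quadraticChar F x := by
  rw [map_mul, map_pow, quadraticChar_sq_one hm, one_mul]

lemma jacobsthalSum_sq_mul {m : F} (hm : m ≠ 0) (k : F) :
    jacobsthalSum (m ^ 2 * k) = quadraticChar F m * jacobsthalSum k := by
  rw [jacobsthalSum, jacobsthalSum, Finset.mul_sum, ← Equiv.sum_comp (Equiv.mulLeft₀ m hm)]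
  refine Finset.sum_congr rfl fun x _ ↦ ?_
  rw [Equiv.mulLeft₀_apply, ← map_mul, ← quadraticChar_sq_mul hm (m * _)]
  congr 1
  ring

lemma jacobsthalSum_zero (hF : ringChar F ≠ 2) : jacobsthalSum (0 : F) = 0 := by
  rw [jacobsthalSum, ← quadraticChar_sum_zero hF]
  refine Finset.sum_congr rfl fun x _ ↦ ?_
  rcases eq_or_ne x 0 with rfl | hx
  · simp
  · rw [show x ^ 3 + 0 * x = x ^ 2 * x by ring, quadraticChar_sq_mul hx]

lemma jacobsthalSum_sq (hF : ringChar F ≠ 2) (m : F) :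
    jacobsthalSum (m ^ 2) = quadraticChar F m * jacobsthalSum (1 : F) := by
  rcases eq_or_ne m 0 with rfl | hm
  · simp [jacobsthalSum_zero hF]
  · rw [← jacobsthalSum_sq_mul hm, mul_one]

lemma card_sq_eq_cube_add_mul (hF : ringChar F ≠ 2) (k : F) :
    (Nat.card {xy : F × F // xy.2 ^ 2 = xy.1 ^ 3 + k * xy.1} : ℤ) =
      Fintype.card F + jacobsthalSum k := by
  have hfib (x : F) : ((Finset.univ.filter fun y : F ↦ y ^ 2 = x ^ 3 + k * x).card : ℤ) =
      quadraticChar F (x ^ 3 + k * x) + 1 := by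
    rw [← quadraticChar_card_sqrts hF]
    congr 2
    ext y
    simp
  rw [Nat.card_eq_fintype_card, Fintype.card_subtype, Finset.card_filter,
    ← Finset.univ_product_univ, Finset.sum_product]
  simp_rw [← Finset.card_filter]
  push_cast
  simp_rw [hfib, Finset.sum_add_distrib]
  simp [jacobsthalSum, add_comm]

lemma sum_quadraticChar_add_mul_add_of_ne (hF : ringChar F ≠ 2) {u v : F} (huv : u ≠ v) :
    ∑ k : F, quadraticChar F ((u + k) * (v + k)) = -1 := by
  have hw : v - u ≠ 0 := sub_ne_zero.2 huv.symm
  have hinv (x : F) : quadraticChar F ((u + (x - u)) * (v + (x - u))) =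
      quadraticChar F (1 + (v - u) * x⁻¹) - if x = 0 then 1 else 0 := by
    split_ifs with hx
    · simp [hx]
    · rw [← quadraticChar_sq_mul hx (1 + _), sub_zero]
      congr 1
      field_simp
      ring
  have hsum : ∑ x : F, quadraticChar F (1 + (v - u) * x⁻¹) = 0 := by
    rw [← quadraticChar_sum_zero hF]
    exact ((Equiv.inv F).trans ((Equiv.mulLeft₀ _ hw).trans (Equiv.addLeft 1))).sum_comp
      (fun y ↦ quadraticChar F y)
  rw [← (Equiv.subRight u).sum_comp]
  simp_rw [Equiv.subRight_apply, hinv]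
  rw [Finset.sum_sub_distrib, hsum]
  simp

lemma sum_quadraticChar_add_mul_add_self (u : F) :
    ∑ k : F, quadraticChar F ((u + k) * (u + k)) = (Fintype.card F : ℤ) - 1 := by
  have hsq (x : F) : quadraticChar F (x * x) = 1 - if x = 0 then 1 else 0 := by
    split_ifs with hx
    · simp [hx]
    · rw [← sq, quadraticChar_sq_one' hx, sub_zero]
  calc ∑ k : F, quadraticChar F ((u + k) * (u + k))
      = ∑ x : F, quadraticChar F (x * x) :=
        Equiv.sum_comp (Equiv.addLeft u) fun x ↦ quadraticChar F (x * x)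
    _ = (Fintype.card F : ℤ) - 1 := by simp [hsq]

lemma quadraticChar_neg_one_eq_one (hF : Fintype.card F % 4 = 1) : quadraticChar F (-1) = 1 :=
  (quadraticChar_one_iff_isSquare (by simp)).2 (FiniteField.isSquare_neg_one_iff.2 (by omega))

lemma sum_quadraticChar_mul_of_sq_eq_sq (hF : Fintype.card F % 4 = 1) (x : F) :
    ∑ y : F, (if x ^ 2 = y ^ 2 then quadraticChar F (x * y) else 0) =
      2 - if x = 0 then 2 else 0 := by
  split_ifs with hx
  · simp [hx]
  have hne := ne_neg_self_of_ringChar_ne_two (ringChar_ne_two_of_card_mod_four hF) hx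
  have hroots (y : F) : (if x ^ 2 = y ^ 2 then quadraticChar F (x * y) else 0) =
      (if y = x then 1 else 0) + if y = -x then 1 else 0 := by
    have hy : x ^ 2 = y ^ 2 ↔ y = x ∨ y = -x := by rw [eq_comm, sq_eq_sq_iff_eq_or_eq_neg]
    simp only [hy]
    rcases eq_or_ne y x with rfl | hyx
    · simp only [true_or, if_true, hne, if_false, add_zero]
      rw [← sq, quadraticChar_sq_one' hx]
    · rcases eq_or_ne y (-x) with rfl | hyx'
      · simp only [or_true, if_true, hyx, if_false, zero_add]
        rw [mul_neg, ← sq, ← mul_neg_one, quadraticChar_sq_mul hx, quadraticChar_neg_one_eq_one hF]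
      · simp [hyx, hyx']
  simp_rw [hroots, Finset.sum_add_distrib]
  simp

lemma sum_jacobsthalSum_sq (hF : Fintype.card F % 4 = 1) :
    ∑ k : F, jacobsthalSum k ^ 2 = 2 * Fintype.card F * ((Fintype.card F : ℤ) - 1) := by
  have hF2 := ringChar_ne_two_of_card_mod_four hF
  have hsq (k : F) : jacobsthalSum k ^ 2 = ∑ x : F, ∑ y : F,
      quadraticChar F (x * y) * quadraticChar F ((x ^ 2 + k) * (y ^ 2 + k)) := by
    rw [jacobsthalSum, sq, Finset.sum_mul_sum]
    refine Finset.sum_congr rfl fun x _ ↦ Finset.sum_congr rfl fun y _ ↦ ?_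
    rw [← map_mul, ← map_mul]
    congr 1
    ring
  have hcorr (x y : F) :
      quadraticChar F (x * y) * ∑ k, quadraticChar F ((x ^ 2 + k) * (y ^ 2 + k)) =
        Fintype.card F * (if x ^ 2 = y ^ 2 then quadraticChar F (x * y) else 0) -
          quadraticChar F x * quadraticChar F y := by
    rw [← map_mul]
    split_ifs with h
    · rw [h, sum_quadraticChar_add_mul_add_self]
      ring
    · rw [sum_quadraticChar_add_mul_add_of_ne hF2 h]
      ring
  calc ∑ k : F, jacobsthalSum k ^ 2
      = ∑ x : F, ∑ y : F, quadraticChar F (x * y) *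
          ∑ k, quadraticChar F ((x ^ 2 + k) * (y ^ 2 + k)) := by
        simp only [hsq, Finset.mul_sum]
        rw [Finset.sum_comm]
        exact Finset.sum_congr rfl fun x _ ↦ Finset.sum_comm
    _ = ∑ x : F, (Fintype.card F : ℤ) * (2 - if x = 0 then 2 else 0) := by
        refine Finset.sum_congr rfl fun x _ ↦ ?_
        rw [Finset.sum_congr rfl fun y _ ↦ hcorr x y, Finset.sum_sub_distrib, ← Finset.mul_sum,
          ← Finset.mul_sum, quadraticChar_sum_zero hF2, mul_zero, sub_zero,
          sum_quadraticChar_mul_of_sq_eq_sq hF]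
    _ = 2 * Fintype.card F * ((Fintype.card F : ℤ) - 1) := by
        rw [← Finset.mul_sum, Finset.sum_sub_distrib]
        simp
        ring

lemma two_mul_jacobsthalSum_sq (hF : ringChar F ≠ 2) {n : F} (hn : quadraticChar F n = -1) (k : F) :
    2 * jacobsthalSum k ^ 2 =
      (jacobsthalSum (1 : F) ^ 2 + jacobsthalSum n ^ 2) * (1 - if k = 0 then 1 else 0) +
        quadraticChar F k * (jacobsthalSum (1 : F) ^ 2 - jacobsthalSum n ^ 2) := by
  have hn0 : n ≠ 0 := by
    rintro rfl
    simp at hn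
  split_ifs with hk
  · simp [hk, jacobsthalSum_zero hF]
  rcases quadraticChar_dichotomy hk with hχ | hχ
  · obtain ⟨m, rfl⟩ := (quadraticChar_one_iff_isSquare hk).1 hχ
    rw [← sq, jacobsthalSum_sq hF, mul_pow, quadraticChar_sq_one (left_ne_zero_of_mul hk), sq m, hχ]
    ring
  · obtain ⟨m, hm⟩ : IsSquare (k * n) := (quadraticChar_one_iff_isSquare (mul_ne_zero hk hn0)).1
      (by rw [map_mul, hχ, hn]; norm_num)
    have hm0 : m ≠ 0 := by
      rintro rfl
      exact mul_ne_zero hk hn0 (by simpa using hm)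
    have hkm : k = (m / n) ^ 2 * n := by
      field_simp
      rw [hm, sq]
    rw [hχ, hkm, jacobsthalSum_sq_mul (div_ne_zero hm0 hn0), mul_pow,
      quadraticChar_sq_one (div_ne_zero hm0 hn0)]
    ring

lemma jacobsthalSum_one_sq_add_sq (hF : Fintype.card F % 4 = 1) {n : F}
    (hn : quadraticChar F n = -1) :
    jacobsthalSum (1 : F) ^ 2 + jacobsthalSum n ^ 2 = 4 * Fintype.card F := by
  have hF2 := ringChar_ne_two_of_card_mod_four hF
  have hsum := Finset.sum_congr (s₁ := (Finset.univ : Finset F)) rfl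
    fun k _ ↦ two_mul_jacobsthalSum_sq hF2 hn k
  simp only [← Finset.mul_sum, sum_jacobsthalSum_sq hF, Finset.sum_add_distrib, ← Finset.sum_mul,
    quadraticChar_sum_zero hF2, Finset.sum_sub_distrib, Finset.sum_ite_eq', Finset.sum_const,
    Finset.mem_univ, if_true, Finset.card_univ, nsmul_eq_mul, mul_one, zero_mul, add_zero] at hsum
  have hcard : (Fintype.card F : ℤ) - 1 ≠ 0 := by
    have := Fintype.one_lt_card (α := F)
    omega
  exact mul_right_cancel₀ hcard (by linarith)

lemma card_filter_cube_add_eq_zero (hF : Fintype.card F % 4 = 1) :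
    (Finset.univ.filter fun x : F ↦ x ^ 3 + 1 * x = 0).card = 3 := by
  obtain ⟨i, hi⟩ : IsSquare (-1 : F) := FiniteField.isSquare_neg_one_iff.2 (by omega)
  have hi0 : i ≠ 0 := by
    rintro rfl
    simp at hi
  have hroots : (Finset.univ.filter fun x : F ↦ x ^ 3 + 1 * x = 0) = {0, i, -i} := by
    ext x
    have hfac : x ^ 3 + 1 * x = x * ((x - i) * (x + i)) := by linear_combination (-x) * hi
    rw [Finset.mem_filter, hfac, mul_eq_zero, mul_eq_zero, sub_eq_zero, add_eq_zero_iff_eq_neg]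
    simp
  exact hroots ▸ Finset.card_eq_three.2 ⟨0, i, -i, hi0.symm, (neg_ne_zero.2 hi0).symm,
    ne_neg_self_of_ringChar_ne_two (ringChar_ne_two_of_card_mod_four hF) hi0, rfl⟩

lemma even_card_filter_quadraticChar_cube_add (hF : Fintype.card F % 4 = 1) :
    Even (Finset.univ.filter fun x : F ↦ quadraticChar F (x ^ 3 + 1 * x) = -1).card := by
  rw [← ZMod.natCast_eq_zero_iff_even, ← nsmul_one, ← Finset.sum_const]
  refine Finset.sum_involution (fun x _ ↦ -x) (fun _ _ ↦ by decide) (fun x hx _ h ↦ ?_)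
    (fun x hx ↦ ?_) fun x _ ↦ neg_neg x
  · have hx0 : x = 0 := by
      by_contra hx0
      exact ne_neg_self_of_ringChar_ne_two (ringChar_ne_two_of_card_mod_four hF) hx0 h.symm
    simp [hx0] at hx
  · simp only [Finset.mem_filter, Finset.mem_univ, true_and] at hx ⊢
    rw [← hx, show (-x) ^ 3 + 1 * -x = -1 * (x ^ 3 + 1 * x) by ring, map_mul,
      quadraticChar_neg_one_eq_one hF, one_mul]

lemma jacobsthalSum_one_mod_four (hF : Fintype.card F % 4 = 1) :
    jacobsthalSum (1 : F) % 4 = 2 := by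
  have hχ (y : F) : quadraticChar F y =
      1 - (if y = 0 then 1 else 0) - 2 * if quadraticChar F y = -1 then 1 else 0 := by
    rcases eq_or_ne y 0 with rfl | hy
    · simp
    · rcases quadraticChar_dichotomy hy with h | h <;> rw [h, if_neg hy] <;> norm_num
  have hsum : jacobsthalSum (1 : F) = Fintype.card F -
      (Finset.univ.filter fun x : F ↦ x ^ 3 + 1 * x = 0).card - 2 *
        (Finset.univ.filter fun x : F ↦ quadraticChar F (x ^ 3 + 1 * x) = -1).card := by
    rw [jacobsthalSum, Finset.sum_congr rfl fun x _ ↦ hχ _, Finset.sum_sub_distrib,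
      Finset.sum_sub_distrib, ← Finset.mul_sum, Finset.sum_boole, Finset.sum_boole]
    simp
  obtain ⟨r, hr⟩ := even_card_filter_quadraticChar_cube_add hF
  rw [hsum, card_filter_cube_add_eq_zero hF, hr]
  omega

lemma jacobsthalSum_eq_zero (hF : Fintype.card F % 4 = 3) (k : F) : jacobsthalSum k = 0 := by
  have hχ : quadraticChar F (-1) = -1 := by
    rw [quadraticChar_neg_one_iff_not_isSquare, FiniteField.isSquare_neg_one_iff]
    omega
  refine self_eq_neg.1 ?_
  calc jacobsthalSum k = ∑ x : F, quadraticChar F ((-x) ^ 3 + k * -x) :=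
        (Equiv.sum_comp (Equiv.neg F) fun x ↦ quadraticChar F (x ^ 3 + k * x)).symm
    _ = ∑ x : F, -quadraticChar F (x ^ 3 + k * x) := Finset.sum_congr rfl fun x _ ↦ by
        rw [show (-x) ^ 3 + k * -x = -1 * (x ^ 3 + k * x) by ring, map_mul, hχ, neg_one_mul]
    _ = -jacobsthalSum k := Finset.sum_neg_distrib ..

lemma exists_jacobsthalSum_one_eq_two_mul (hF : Fintype.card F % 4 = 1) :
    ∃ a b : ℤ, jacobsthalSum (1 : F) = 2 * a ∧ Odd a ∧ (Fintype.card F : ℤ) = a ^ 2 + b ^ 2 := by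
  obtain ⟨n, hn⟩ := quadraticChar_exists_neg_one (ringChar_ne_two_of_card_mod_four hF)
  have hsq := jacobsthalSum_one_sq_add_sq hF hn
  have hmod := jacobsthalSum_one_mod_four hF
  obtain ⟨a, ha⟩ : ∃ a, jacobsthalSum (1 : F) = 2 * a := ⟨jacobsthalSum (1 : F) / 2, by omega⟩
  obtain ⟨b, hb⟩ : Even (jacobsthalSum n) := by
    have : jacobsthalSum n ^ 2 = 2 * (2 * Fintype.card F - 2 * a ^ 2) := by
      rw [ha] at hsq
      linarith
    exact (Int.even_pow.1 (this ▸ even_two_mul _)).1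
  refine ⟨a, b, ha, Int.odd_iff.2 (by omega), ?_⟩
  rw [ha, hb] at hsq
  linarith

lemma neg_nagaoAverage_eq (p : ℕ) [Fact p.Prime] (hp : p ≠ 2) :
    -nagaoAverage p = (jacobsthalSum (1 : ZMod p) : ℝ) ^ 2 / p := by
  have hF : ringChar (ZMod p) ≠ 2 := by rwa [ZMod.ringChar_zmod_n]
  have hfib (t : ZMod p) : (p : ℝ) - (Nat.card {xy : ZMod p × ZMod p //
      xy.2 ^ 2 = xy.1 ^ 3 + (t ^ 3 + t) ^ 2 * xy.1} : ℝ) =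
        ((-(quadraticChar (ZMod p) (t ^ 3 + 1 * t) * jacobsthalSum (1 : ZMod p)) : ℤ) : ℝ) := by
    have hcard := card_sq_eq_cube_add_mul hF ((t ^ 3 + t) ^ 2)
    rw [jacobsthalSum_sq hF, ZMod.card] at hcard
    rw [one_mul, ← Int.cast_natCast (Nat.card _), hcard]
    push_cast
    ring
  rw [nagaoAverage, finsum_eq_sum_of_fintype]
  simp_rw [hfib]
  rw [← Int.cast_sum, Finset.sum_neg_distrib, ← Finset.sum_mul, ← jacobsthalSum]
  push_cast
  ring

end Jacobsthal

section Lattice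

lemma summable_int_prod_norm_rpow_neg {k : ℝ} (hk : 2 < k) :
    Summable fun v : ℤ × ℤ ↦ ‖v‖ ^ (-k) := by
  rw [← (finTwoArrowEquiv ℤ).summable_iff]
  refine (EisensteinSeries.summable_one_div_norm_rpow hk).congr fun v ↦ ?_
  rw [Function.comp_apply, finTwoArrowEquiv_apply]
  congr 1
  refine le_antisymm ((pi_norm_le_iff_of_nonneg (norm_nonneg _)).2 fun i ↦ ?_)
    (norm_prod_le_iff.2 ⟨norm_le_pi_norm v 0, norm_le_pi_norm v 1⟩)
  fin_cases i
  exacts [norm_fst_le (v 0, v 1), norm_snd_le (v 0, v 1)]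

lemma one_le_norm_of_int_prod_ne_zero {v : ℤ × ℤ} (hv : v ≠ 0) : 1 ≤ ‖v‖ := by
  rw [Prod.norm_def, Int.norm_eq_abs, Int.norm_eq_abs, le_max_iff]
  rcases not_and_or.1 (Prod.ext_iff.not.1 hv) with h | h
  · exact Or.inl (mod_cast Int.one_le_abs h)
  · exact Or.inr (mod_cast Int.one_le_abs h)

lemma summable_max_half_norm_sq_rpow_neg :
    Summable fun v : ℤ × ℤ ↦ max (1 / 2) (‖v‖ ^ 2) ^ (-(5 / 4) : ℝ) := by
  refine (summable_congr_cofinite ?_).2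
    (summable_int_prod_norm_rpow_neg (by norm_num : (2 : ℝ) < 5 / 2))
  filter_upwards [(Set.finite_singleton (0 : ℤ × ℤ)).compl_mem_cofinite] with v hv
  have hv1 := one_le_norm_of_int_prod_ne_zero hv
  rw [max_eq_right (by nlinarith), ← Real.rpow_natCast, ← Real.rpow_mul (norm_nonneg v)]
  norm_num

lemma sq_le_two_mul_add_sq (k : ℤ) {u : ℝ} (hu0 : 0 ≤ u) (hu1 : u ≤ 1) :
    (k : ℝ) ^ 2 ≤ (2 * k + u) ^ 2 := by
  rcases le_or_gt 0 k with hk | hk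
  · have hk0 : (0 : ℝ) ≤ k := mod_cast hk
    nlinarith [mul_nonneg hk0 hu0]
  · have hk1 : (k : ℝ) ≤ -1 := mod_cast (by omega : k ≤ -1)
    nlinarith

lemma max_half_norm_sq_le (v : ℤ × ℤ) {t : ℝ} (ht0 : 0 ≤ t) (ht1 : t ≤ 1) :
    max (1 / 2) (‖v‖ ^ 2) ≤ (2 * v.1 + 1 - t) ^ 2 + (2 * v.2 + t) ^ 2 := by
  refine max_le ?_ ?_
  · have hodd : (1 : ℝ) ≤ (2 * v.1 + 2 * v.2 + 1) ^ 2 := by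
      have : 0 < (2 * v.1 + 2 * v.2 + 1) ^ 2 := sq_pos_of_ne_zero (by omega)
      exact_mod_cast this
    nlinarith [sq_nonneg ((2 * v.1 + 1 - t) - (2 * v.2 + t))]
  · have h1 := sq_le_two_mul_add_sq v.1 (sub_nonneg.2 ht1) (by linarith)
    have h2 := sq_le_two_mul_add_sq v.2 ht0 ht1
    rw [Prod.norm_def, Int.norm_eq_abs, Int.norm_eq_abs, add_sub_assoc]
    rcases max_cases |(v.1 : ℝ)| |(v.2 : ℝ)| with ⟨h, -⟩ | ⟨h, -⟩ <;> rw [h, sq_abs] <;> nlinarith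

end Lattice

section HeckeSeries

/-- The real part of `(x + iy)² |x + iy|^(-2s-2)`, the term of the Hecke series at `x + iy`. -/
noncomputable def heckeTerm (s : ℂ) (x y : ℝ) : ℂ :=
  ((x ^ 2 - y ^ 2 : ℝ) : ℂ) * ((x ^ 2 + y ^ 2 : ℝ) : ℂ) ^ (-s - 1)

/-- The derivative of `heckeTerm s` at `(x, y)` in the direction `(-1, 1)`. -/
noncomputable def heckeTermDeriv (s : ℂ) (x y : ℝ) : ℂ :=
  ((-2 * x - 2 * y : ℝ) : ℂ) * ((x ^ 2 + y ^ 2 : ℝ) : ℂ) ^ (-s - 1) +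
    ((x ^ 2 - y ^ 2 : ℝ) : ℂ) * ((-s - 1) * ((x ^ 2 + y ^ 2 : ℝ) : ℂ) ^ (-s - 1 - 1) *
      ((-2 * x + 2 * y : ℝ) : ℂ))

/-- The terms of the Hecke series at the odd Gaussian integers `(2m + 1) + 2n i` and
`2m + (2n + 1) i`. They enter with opposite signs, and since these points are adjacent the
difference gains half a power of the norm, so that the series of the differences converges
beyond `Re s = 1`. -/
noncomputable def heckeTermDiff (s : ℂ) (v : ℤ × ℤ) : ℂ :=
  heckeTerm s (2 * v.1 + 1) (2 * v.2) - heckeTerm s (2 * v.1) (2 * v.2 + 1)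

/-- Four times the L-function of the Hecke character of `ℚ(i)` sending an `α` with odd real and even
imaginary part to `(α / |α|)²`, continued to `Re s > 3 / 4`. -/
noncomputable def heckeL (s : ℂ) : ℂ := ∑' v, heckeTermDiff s v

lemma hasDerivAt_heckeTerm (s : ℂ) (a b t : ℝ) (hN : 0 < (a - t) ^ 2 + (b + t) ^ 2) :
    HasDerivAt (fun t : ℝ ↦ heckeTerm s (a - t) (b + t)) (heckeTermDeriv s (a - t) (b + t)) t := by
  have hx : HasDerivAt (fun t : ℝ ↦ (a - t) ^ 2) (-2 * (a - t)) t := by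
    simpa using ((hasDerivAt_id t).const_sub a).fun_pow 2
  have hy : HasDerivAt (fun t : ℝ ↦ (b + t) ^ 2) (2 * (b + t)) t := by
    simpa using ((hasDerivAt_id t).const_add b).fun_pow 2
  have hpow : HasDerivAt (fun z : ℂ ↦ z ^ (-s - 1))
      ((-s - 1) * (((a - t) ^ 2 + (b + t) ^ 2 : ℝ) : ℂ) ^ (-s - 1 - 1) * 1)
      (((a - t) ^ 2 + (b + t) ^ 2 : ℝ) : ℂ) :=
    (hasDerivAt_id _).cpow_const (Or.inl (by simpa using hN))
  simpa [heckeTerm, heckeTermDeriv, Function.comp_def] using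
    (hx.fun_sub hy).ofReal_comp.fun_mul (hpow.comp t (hx.fun_add hy).ofReal_comp)

lemma abs_add_le_four_mul_rpow (x y : ℝ) :
    |-2 * x + 2 * y| ≤ 4 * (x ^ 2 + y ^ 2) ^ (1 / 2 : ℝ) := by
  rw [← Real.sqrt_eq_rpow]
  refine abs_le_of_sq_le_sq ?_ (by positivity)
  rw [mul_pow, Real.sq_sqrt (by positivity)]
  nlinarith [sq_nonneg (x + y)]

lemma norm_heckeTermDeriv_le (s : ℂ) {x y : ℝ} (hN : 0 < x ^ 2 + y ^ 2) :
    ‖heckeTermDeriv s x y‖ ≤ 4 * (‖s‖ + 2) * (x ^ 2 + y ^ 2) ^ (-s.re - 1 / 2) := by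
  set N := x ^ 2 + y ^ 2 with hN_def
  have hpow1 : ‖(N : ℂ) ^ (-s - 1)‖ = N ^ (-s.re - 1) := by
    simp [Complex.norm_cpow_eq_rpow_re_of_pos hN]
  have hpow2 : ‖(N : ℂ) ^ (-s - 1 - 1)‖ = N ^ (-s.re - 2) := by
    rw [Complex.norm_cpow_eq_rpow_re_of_pos hN]
    congr 1
    simp
    ring
  have hdiff : |x ^ 2 - y ^ 2| ≤ N := abs_le.2 ⟨by nlinarith, by nlinarith⟩
  have hs : ‖-s - 1‖ ≤ ‖s‖ + 1 := (norm_sub_le _ _).trans_eq (by simp)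
  have hN1 : N ^ (1 / 2 : ℝ) * N ^ (-s.re - 1) = N ^ (-s.re - 1 / 2) := by
    rw [← Real.rpow_add hN]
    ring_nf
  have hN2 : N * (N ^ (1 / 2 : ℝ) * N ^ (-s.re - 2)) = N ^ (-s.re - 1 / 2) := by
    nth_rw 1 [← Real.rpow_one N]
    rw [← Real.rpow_add hN, ← Real.rpow_add hN]
    ring_nf
  calc ‖heckeTermDeriv s x y‖
      ≤ |-2 * x - 2 * y| * N ^ (-s.re - 1) +
          |x ^ 2 - y ^ 2| * (‖-s - 1‖ * N ^ (-s.re - 2) * |-2 * x + 2 * y|) := by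
        refine (norm_add_le _ _).trans_eq ?_
        simp only [norm_mul, ← hN_def, hpow1, hpow2, Complex.norm_real, Real.norm_eq_abs]
    _ ≤ 4 * N ^ (1 / 2 : ℝ) * N ^ (-s.re - 1) +
          N * ((‖s‖ + 1) * N ^ (-s.re - 2) * (4 * N ^ (1 / 2 : ℝ))) := by
        have hsub : |-2 * x - 2 * y| ≤ 4 * N ^ (1 / 2 : ℝ) := by
          simpa [sub_eq_add_neg] using abs_add_le_four_mul_rpow x (-y)
        gcongr
        exact abs_add_le_four_mul_rpow x y
    _ = 4 * (N ^ (1 / 2 : ℝ) * N ^ (-s.re - 1)) +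
          4 * (‖s‖ + 1) * (N * (N ^ (1 / 2 : ℝ) * N ^ (-s.re - 2))) := by ring
    _ = 4 * (‖s‖ + 2) * N ^ (-s.re - 1 / 2) := by
        rw [hN1, hN2]
        ring

lemma rpow_neg_sub_half_le {σ R M N : ℝ} (hσ : 3 / 4 ≤ σ) (hσR : σ ≤ R) (hM : 1 / 2 ≤ M)
    (hMN : M ≤ N) : N ^ (-σ - 1 / 2) ≤ 2 ^ R * M ^ (-(5 / 4) : ℝ) := by
  have hN : 0 < N := by linarith
  have hexcess : N ^ (-(σ - 3 / 4)) ≤ 2 ^ R := by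
    calc N ^ (-(σ - 3 / 4)) ≤ (1 / 2 : ℝ) ^ (-(σ - 3 / 4)) :=
          Real.rpow_le_rpow_of_nonpos (by norm_num) (by linarith) (by linarith)
      _ = 2 ^ (σ - 3 / 4) := by
          rw [one_div, Real.inv_rpow zero_le_two, ← Real.rpow_neg zero_le_two, neg_neg]
      _ ≤ 2 ^ R := Real.rpow_le_rpow_of_exponent_le one_le_two (by linarith)
  calc N ^ (-σ - 1 / 2) = N ^ (-(σ - 3 / 4)) * N ^ (-(5 / 4) : ℝ) := by
        rw [← Real.rpow_add hN]
        ring_nf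
    _ ≤ 2 ^ R * M ^ (-(5 / 4) : ℝ) := by
        have := Real.rpow_le_rpow_of_nonpos (z := -(5 / 4)) (by linarith) hMN (by norm_num)
        gcongr

lemma norm_heckeTermDiff_le {s : ℂ} {R : ℝ} (hs : 3 / 4 ≤ s.re) (hR : ‖s‖ ≤ R) (v : ℤ × ℤ) :
    ‖heckeTermDiff s v‖ ≤
      4 * (R + 2) * 2 ^ R * max (1 / 2) (‖v‖ ^ 2) ^ (-(5 / 4) : ℝ) := by
  set M := max (1 / 2) (‖v‖ ^ 2)
  have hM : 1 / 2 ≤ M := le_max_left _ _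
  have hpos {t : ℝ} (ht : t ∈ Set.Icc 0 1) : M ≤ (2 * v.1 + 1 - t) ^ 2 + (2 * v.2 + t) ^ 2 :=
    max_half_norm_sq_le v ht.1 ht.2
  have hbound {t : ℝ} (ht : t ∈ Set.Icc 0 1) :
      ‖heckeTermDeriv s (2 * v.1 + 1 - t) (2 * v.2 + t)‖ ≤
        4 * (R + 2) * 2 ^ R * M ^ (-(5 / 4) : ℝ) := by
    refine (norm_heckeTermDeriv_le s (by linarith [hpos ht])).trans ?_
    have hR0 : 0 ≤ R := (norm_nonneg s).trans hR
    rw [mul_assoc _ (2 ^ R)]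
    gcongr
    exact rpow_neg_sub_half_le hs ((Complex.re_le_norm s).trans hR) hM (hpos ht)
  have hmvt := norm_image_sub_le_of_norm_deriv_le_segment_01'
    (f := fun t : ℝ ↦ heckeTerm s (2 * v.1 + 1 - t) (2 * v.2 + t))
    (fun t ht ↦ (hasDerivAt_heckeTerm s _ _ t (by linarith [hpos ht])).hasDerivWithinAt)
    fun t ht ↦ hbound (Set.Ico_subset_Icc_self ht)
  rw [norm_sub_rev] at hmvt
  simpa [heckeTermDiff] using hmvt

lemma summable_heckeTermDiff {s : ℂ} (hs : 3 / 4 ≤ s.re) : Summable (heckeTermDiff s) :=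
  (summable_max_half_norm_sq_rpow_neg.mul_left _).of_norm_bounded
    (norm_heckeTermDiff_le hs le_rfl)

lemma differentiable_heckeTerm {x y : ℝ} (h : 0 < x ^ 2 + y ^ 2) :
    Differentiable ℂ fun s ↦ heckeTerm s x y := fun _ ↦
  (DifferentiableAt.const_cpow (by fun_prop) (Or.inl (mod_cast h.ne'))).const_mul _

lemma differentiable_heckeTermDiff (v : ℤ × ℤ) : Differentiable ℂ fun s ↦ heckeTermDiff s v := by
  have hpos {t : ℝ} (ht0 : 0 ≤ t) (ht1 : t ≤ 1) :
      0 < (2 * v.1 + 1 - t) ^ 2 + (2 * v.2 + t) ^ 2 :=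
    lt_of_lt_of_le (by positivity) (max_half_norm_sq_le v ht0 ht1)
  exact (differentiable_heckeTerm (by simpa using hpos le_rfl zero_le_one)).sub
    (differentiable_heckeTerm (by simpa using hpos zero_le_one le_rfl))

lemma differentiableOn_heckeL : DifferentiableOn ℂ heckeL {s | 3 / 4 < s.re} := by
  intro s hs
  set U : Set ℂ := {z | 3 / 4 < z.re} ∩ {z | ‖z‖ < ‖s‖ + 1}
  have hU : IsOpen U := (isOpen_lt continuous_const Complex.continuous_re).inter
    (isOpen_lt continuous_norm continuous_const)
  have hdiff := Complex.differentiableOn_tsum_of_summable_norm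
    (F := fun v s ↦ heckeTermDiff s v) (summable_max_half_norm_sq_rpow_neg.mul_left _)
    (fun v ↦ (differentiable_heckeTermDiff v).differentiableOn) hU
    fun v w hw ↦ norm_heckeTermDiff_le (le_of_lt hw.1) (le_of_lt hw.2) v
  exact (hdiff.differentiableAt (hU.mem_nhds ⟨hs, by simp⟩)).differentiableWithinAt

/-- The real part of `(x + iy)^(-2)`, which is `heckeTerm 1 x y`. -/
noncomputable def heckeTermOne (x y : ℝ) : ℝ := (x ^ 2 - y ^ 2) / (x ^ 2 + y ^ 2) ^ 2

lemma heckeTerm_one (x y : ℝ) : heckeTerm 1 x y = heckeTermOne x y := by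
  rw [heckeTerm, heckeTermOne, show (-1 - 1 : ℂ) = ((-2 : ℤ) : ℂ) by norm_num,
    Complex.cpow_intCast, zpow_neg]
  push_cast
  rw [div_eq_mul_inv]
  norm_cast

lemma heckeTermOne_abs (x y : ℝ) : heckeTermOne |x| y = heckeTermOne x y := by
  simp [heckeTermOne]

lemma re_one_div_sq (x y : ℝ) : (1 / ((x : ℂ) + y * Complex.I) ^ 2).re = heckeTermOne x y := by
  rw [one_div, Complex.inv_re, map_pow, Complex.normSq_add_mul_I]
  simp [heckeTermOne, sq]

lemma hasSum_heckeTermOne {a c q : ℝ} (ha : 0 < a)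
    (hq : Complex.exp (2 * Real.pi * Complex.I * ((c + a * Complex.I) / 2)) = q)
    (hq0 : q ≠ 0) (hq1 : |q| < 1) :
    HasSum (fun n : ℤ ↦ heckeTermOne a (2 * n + c)) (Real.pi ^ 2 * (q / (1 - q) ^ 2)) := by
  let z : UpperHalfPlane := ⟨(c + a * Complex.I) / 2, by simp [ha]⟩
  have hz : (z : ℂ) = (c + a * Complex.I) / 2 := rfl
  have hexp := EisensteinSeries.qExpansion_identity (k := 1) le_rfl z
  simp only [hz, hq, pow_one] at hexp
  rw [tsum_coe_mul_geometric_of_norm_lt_one (by simpa using hq1)] at hexp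
  have hval : ((-2 * Real.pi * Complex.I) ^ (1 + 1) / (Nat.factorial 1 : ℂ)) *
      ((q : ℂ) / (1 - q) ^ 2) = ((-4 * (Real.pi ^ 2 * (q / (1 - q) ^ 2)) : ℝ) : ℂ) := by
    push_cast
    linear_combination 4 * (Real.pi : ℂ) ^ 2 * (q / (1 - q) ^ 2) * Complex.I_sq
  have hval_ne : (-4 * (Real.pi ^ 2 * (q / (1 - q) ^ 2)) : ℝ) ≠ 0 := by
    have : 1 - q ≠ 0 := sub_ne_zero.2 (lt_of_abs_lt hq1).ne'
    positivity
  rw [hval] at hexp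
  have hsummable : Summable fun n : ℤ ↦ 1 / (((c + a * Complex.I) / 2 : ℂ) + n) ^ (1 + 1) := by
    by_contra hns
    rw [tsum_eq_zero_of_not_summable hns] at hexp
    exact hval_ne (mod_cast hexp.symm)
  have hre := (Complex.hasSum_re (hexp ▸ hsummable.hasSum)).mul_left (-(1 / 4 : ℝ))
  rw [Complex.ofReal_re, ← mul_assoc, show -(1 / 4 : ℝ) * -4 = 1 by norm_num, one_mul] at hre
  refine hre.congr_fun fun n ↦ ?_
  have hsplit : ((c + a * Complex.I) / 2 : ℂ) + n =
      ((n + c / 2 : ℝ) : ℂ) + ((a / 2 : ℝ) : ℂ) * Complex.I := by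
    push_cast
    ring
  rw [hsplit, one_add_one_eq_two, re_one_div_sq, heckeTermOne, heckeTermOne]
  field_simp
  ring

lemma exists_pos_hasSum_heckeTermOne_even {x : ℝ} (hx : x ≠ 0) :
    ∃ r : ℝ, 0 < r ∧ HasSum (fun n : ℤ ↦ heckeTermOne x (2 * n)) r := by
  have ha : 0 < |x| := abs_pos.2 hx
  have hq : Real.exp (-(Real.pi * |x|)) < 1 := Real.exp_lt_one_iff.2 (by simp [Real.pi_pos, hx])
  have hsum := hasSum_heckeTermOne (c := 0) (q := Real.exp (-(Real.pi * |x|))) ha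
    (by
      push_cast
      congr 1
      linear_combination (Real.pi * |x| : ℂ) * Complex.I_sq)
    (Real.exp_ne_zero _) (by rwa [Real.abs_exp])
  simp only [add_zero, heckeTermOne_abs] at hsum
  have : 0 < 1 - Real.exp (-(Real.pi * |x|)) := sub_pos.2 hq
  exact ⟨_, by positivity, hsum⟩

lemma exists_nonpos_hasSum_heckeTermOne_odd (x : ℝ) :
    ∃ r : ℝ, r ≤ 0 ∧ HasSum (fun n : ℤ ↦ heckeTermOne x (2 * n + 1)) r := by
  rcases eq_or_ne x 0 with rfl | hx
  · have hinj : Function.Injective fun n : ℤ ↦ 2 * n + 1 := fun a b h ↦ by simpa using h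
    have hterm (n : ℤ) : heckeTermOne 0 (2 * n + 1) = -(1 / ((2 * n + 1 : ℤ) : ℝ) ^ 2) := by
      have : (2 * (n : ℝ) + 1) ≠ 0 := mod_cast (by omega : (2 * n + 1 : ℤ) ≠ 0)
      rw [heckeTermOne]
      push_cast
      field_simp
      ring
    simp_rw [hterm]
    exact ⟨_, tsum_nonpos fun n ↦ neg_nonpos.2 (one_div_nonneg.2 (sq_nonneg _)),
      ((Real.summable_one_div_int_pow.2 one_lt_two).comp_injective hinj).neg.hasSum⟩
  · have ha : 0 < |x| := abs_pos.2 hx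
    have hq : Real.exp (-(Real.pi * |x|)) < 1 := Real.exp_lt_one_iff.2 (by simp [Real.pi_pos, hx])
    have hsum := hasSum_heckeTermOne (c := 1) (q := -Real.exp (-(Real.pi * |x|))) ha
      (by
        push_cast
        rw [show 2 * (Real.pi : ℂ) * Complex.I * ((1 + |x| * Complex.I) / 2) =
            Real.pi * Complex.I + -(Real.pi * |x|) by
          linear_combination (Real.pi * |x| : ℂ) * Complex.I_sq, Complex.exp_add,
          Complex.exp_pi_mul_I, neg_one_mul])
      (neg_ne_zero.2 (Real.exp_ne_zero _)) (by rwa [abs_neg, Real.abs_exp])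
    simp only [heckeTermOne_abs] at hsum
    exact ⟨_, mul_nonpos_of_nonneg_of_nonpos (by positivity) (div_nonpos_of_nonpos_of_nonneg
      (neg_nonpos.2 (Real.exp_pos _).le) (by positivity)), hsum⟩

/-- Summed along a row, the terms at `s = 1` are given by Lipschitz's formula, and every row sum is
positive. -/
lemma heckeL_one_ne_zero : heckeL 1 ≠ 0 := by
  have hterm (v : ℤ × ℤ) : heckeTermDiff 1 v =
      ((heckeTermOne (2 * v.1 + 1) (2 * v.2) - heckeTermOne (2 * v.1) (2 * v.2 + 1) : ℝ) : ℂ) := by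
    rw [heckeTermDiff, heckeTerm_one, heckeTerm_one, Complex.ofReal_sub]
  have hsummable : Summable fun v : ℤ × ℤ ↦
      heckeTermOne (2 * v.1 + 1) (2 * v.2) - heckeTermOne (2 * v.1) (2 * v.2 + 1) :=
    Complex.summable_ofReal.1 ((summable_heckeTermDiff (by norm_num)).congr hterm)
  have hrow (m : ℤ) : ∃ r : ℝ, 0 < r ∧ HasSum
      (fun n : ℤ ↦ heckeTermOne (2 * m + 1) (2 * n) - heckeTermOne (2 * m) (2 * n + 1)) r := by
    obtain ⟨r₁, hr₁, hs₁⟩ := exists_pos_hasSum_heckeTermOne_even (x := 2 * m + 1)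
      (mod_cast (by omega : (2 * m + 1 : ℤ) ≠ 0))
    obtain ⟨r₂, hr₂, hs₂⟩ := exists_nonpos_hasSum_heckeTermOne_odd (2 * m)
    exact ⟨r₁ - r₂, by linarith, hs₁.sub hs₂⟩
  choose r hr_pos hr using hrow
  have hsum := hsummable.hasSum.prod_fiberwise hr
  rw [heckeL, tsum_congr hterm, ← Complex.ofReal_tsum, ← hsum.tsum_eq]
  exact_mod_cast (hsum.summable.tsum_pos (fun m ↦ (hr_pos m).le) 0 (hr_pos 0)).ne'

end HeckeSeries

section GaussianHecke

/-- The absolute norm `|α|²` of a Gaussian integer, as a natural number. -/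
def gaussNorm : GaussianInt →*₀ ℕ :=
  Int.natAbsHom.comp { Zsqrtd.normMonoidHom with map_zero' := Zsqrtd.norm_zero }

lemma gaussNorm_apply (α : GaussianInt) : gaussNorm α = α.norm.natAbs := rfl

lemma intCast_gaussNorm (α : GaussianInt) : (gaussNorm α : ℤ) = α.re ^ 2 + α.im ^ 2 := by
  rw [gaussNorm_apply, Int.natAbs_of_nonneg (GaussianInt.norm_nonneg α), Zsqrtd.norm_def]
  ring

lemma realCast_gaussNorm (α : GaussianInt) : (gaussNorm α : ℝ) = (α.re : ℝ) ^ 2 + α.im ^ 2 :=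
  mod_cast intCast_gaussNorm α

lemma realCast_gaussNorm_eq_norm_sq (α : GaussianInt) : (gaussNorm α : ℝ) = ‖(α : ℂ)‖ ^ 2 := by
  rw [realCast_gaussNorm, ← Complex.normSq_eq_norm_sq, GaussianInt.toComplex_def₂,
    Complex.normSq_mk]
  ring

lemma gaussNorm_eq_zero {α : GaussianInt} : gaussNorm α = 0 ↔ α = 0 := by
  rw [gaussNorm_apply, Int.natAbs_eq_zero, GaussianInt.norm_eq_zero]

lemma gaussNorm_eq_one {α : GaussianInt} : gaussNorm α = 1 ↔ IsUnit α := Zsqrtd.norm_eq_one_iff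

lemma one_le_gaussNorm {α : GaussianInt} (hα : α ≠ 0) : 1 ≤ gaussNorm α :=
  Nat.one_le_iff_ne_zero.2 (mt gaussNorm_eq_zero.1 hα)

/-- The character `α ↦ ±1` modulo `2` of the Gaussian integers: `1` on `1 + 2ℤ[i]`, `-1` on
`i + 2ℤ[i]` and `0` on the multiples of `1 + i`. -/
def gaussSign : GaussianInt →*₀ ℤ where
  toFun α := if (α.re + α.im) % 2 = 0 then 0 else if α.re % 2 = 0 then -1 else 1
  map_zero' := by simp
  map_one' := by simp
  map_mul' α β := by
    rw [Zsqrtd.re_mul, Zsqrtd.im_mul]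
    rcases Int.emod_two_eq_zero_or_one α.re with h1 | h1 <;>
    rcases Int.emod_two_eq_zero_or_one α.im with h2 | h2 <;>
    rcases Int.emod_two_eq_zero_or_one β.re with h3 | h3 <;>
    rcases Int.emod_two_eq_zero_or_one β.im with h4 | h4 <;>
    simp [Int.add_emod, Int.mul_emod, h1, h2, h3, h4]

lemma gaussSign_apply (α : GaussianInt) :
    gaussSign α = if (α.re + α.im) % 2 = 0 then 0 else if α.re % 2 = 0 then -1 else 1 := rfl

lemma gaussSign_star (α : GaussianInt) : gaussSign (star α) = gaussSign α := by
  have : (α.re - α.im) % 2 = (α.re + α.im) % 2 := by omega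
  simp [gaussSign_apply, ← sub_eq_add_neg, this]

lemma gaussNorm_star (α : GaussianInt) : gaussNorm (star α) = gaussNorm α := by
  rw [gaussNorm_apply, Zsqrtd.norm_conj, gaussNorm_apply]

lemma abs_gaussSign_le_one (α : GaussianInt) : |gaussSign α| ≤ 1 := by
  rw [gaussSign_apply]
  split_ifs <;> simp

/-- The unitary Hecke character `α ↦ ±(α / |α|)²` of `ℚ(i)`, where the sign makes it trivial on
units. -/
noncomputable def heckeChar : GaussianInt →*₀ ℂ where
  toFun α := gaussSign α * ((α : ℂ) ^ 2 / gaussNorm α)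
  map_zero' := by simp
  map_one' := by simp
  map_mul' α β := by
    simp only [map_mul, Int.cast_mul, Nat.cast_mul, mul_pow, mul_div_mul_comm]
    ring

lemma heckeChar_apply (α : GaussianInt) :
    heckeChar α = gaussSign α * ((α : ℂ) ^ 2 / gaussNorm α) := rfl

lemma norm_heckeChar_le_one (α : GaussianInt) : ‖heckeChar α‖ ≤ 1 := by
  have hsign : ‖(gaussSign α : ℂ)‖ ≤ 1 := by
    rw [Complex.norm_intCast]
    exact_mod_cast abs_gaussSign_le_one α
  rw [heckeChar_apply, norm_mul, norm_div, norm_pow, ← realCast_gaussNorm_eq_norm_sq,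
    Complex.norm_natCast]
  exact mul_le_one₀ hsign (by positivity) (div_self_le_one _)

/-- The term `α ↦ heckeChar α * N(α)^(-s)` of the Hecke L-series, extended by `0` at `α = 0`. -/
noncomputable def heckeSummand (s : ℂ) : GaussianInt →*₀ ℂ where
  toFun α := heckeChar α * (gaussNorm α : ℂ) ^ (-s)
  map_zero' := by simp
  map_one' := by simp
  map_mul' α β := by
    rw [map_mul, map_mul, Nat.cast_mul, Complex.natCast_mul_natCast_cpow]
    ring

lemma heckeSummand_apply (s : ℂ) (α : GaussianInt) :
    heckeSummand s α = heckeChar α * (gaussNorm α : ℂ) ^ (-s) := rfl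

lemma norm_heckeSummand_le {s : ℂ} {σ : ℝ} (hσ : σ ≤ s.re) (α : GaussianInt) :
    ‖heckeSummand s α‖ ≤ (gaussNorm α : ℝ) ^ (-σ) := by
  rcases eq_or_ne α 0 with rfl | hα
  · simp only [map_zero, norm_zero]
    positivity
  · have hN := one_le_gaussNorm hα
    rw [heckeSummand_apply, norm_mul, Complex.norm_natCast_cpow_of_pos hN, Complex.neg_re]
    exact (mul_le_of_le_one_left (by positivity) (norm_heckeChar_le_one α)).trans
      (Real.rpow_le_rpow_of_exponent_le (mod_cast hN) (by linarith))

/-- The coordinates of a Gaussian integer. -/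
def gaussCoords : GaussianInt ≃ ℤ × ℤ where
  toFun α := (α.re, α.im)
  invFun v := ⟨v.1, v.2⟩

lemma norm_gaussCoords_sq_le (α : GaussianInt) : ‖gaussCoords α‖ ^ 2 ≤ gaussNorm α := by
  have hnorm : ‖gaussCoords α‖ = max |(α.re : ℝ)| |(α.im : ℝ)| := by
    simp [gaussCoords, Prod.norm_def, Int.norm_eq_abs]
  rw [realCast_gaussNorm, hnorm]
  rcases max_choice |(α.re : ℝ)| |(α.im : ℝ)| with h | h <;> rw [h, sq_abs] <;>
    nlinarith [sq_nonneg (α.re : ℝ), sq_nonneg (α.im : ℝ)]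

lemma summable_gaussNorm_rpow_neg {σ : ℝ} (hσ : 1 < σ) :
    Summable fun α : GaussianInt ↦ (gaussNorm α : ℝ) ^ (-σ) := by
  have hsum := gaussCoords.summable_iff.2
    (summable_int_prod_norm_rpow_neg (k := 2 * σ) (by linarith))
  refine hsum.of_nonneg_of_le (fun α ↦ by positivity) fun α ↦ ?_
  rcases eq_or_ne α 0 with rfl | hα
  · rw [map_zero, Nat.cast_zero, Real.zero_rpow (by linarith)]
    exact Real.rpow_nonneg (norm_nonneg _) _
  have hpos : 0 < ‖gaussCoords α‖ := by
    refine norm_pos_iff.2 fun h ↦ hα ?_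
    rw [Prod.mk_eq_zero] at h
    exact Zsqrtd.ext h.1 h.2
  calc (gaussNorm α : ℝ) ^ (-σ) ≤ (‖gaussCoords α‖ ^ 2) ^ (-σ) :=
        Real.rpow_le_rpow_of_nonpos (by positivity) (norm_gaussCoords_sq_le α) (by linarith)
    _ = ‖gaussCoords α‖ ^ (-(2 * σ)) := by
        rw [← Real.rpow_natCast, ← Real.rpow_mul hpos.le]
        push_cast
        ring_nf

lemma summable_norm_heckeSummand {s : ℂ} (hs : 1 < s.re) :
    Summable fun α ↦ ‖heckeSummand s α‖ :=
  (summable_gaussNorm_rpow_neg hs).of_nonneg_of_le (fun _ ↦ norm_nonneg _)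
    (norm_heckeSummand_le le_rfl)

lemma heckeSummand_add_heckeSummand_star (s : ℂ) (α : GaussianInt) :
    heckeSummand s α + heckeSummand s (star α) =
      2 * (gaussSign α * heckeTerm s α.re α.im) := by
  rcases eq_or_ne α 0 with rfl | hα
  · simp
  have hN : (gaussNorm α : ℂ) ≠ 0 := mod_cast mt gaussNorm_eq_zero.1 hα
  have hcast : (((α.re : ℝ) ^ 2 + (α.im : ℝ) ^ 2 : ℝ) : ℂ) = gaussNorm α := by
    rw [← realCast_gaussNorm]
    norm_cast
  rw [heckeSummand_apply, heckeSummand_apply, heckeChar_apply, heckeChar_apply, gaussSign_star,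
    gaussNorm_star, heckeTerm, hcast, Complex.cpow_sub _ _ hN, Complex.cpow_one,
    GaussianInt.toComplex_def, GaussianInt.toComplex_def, Zsqrtd.re_star, Zsqrtd.im_star]
  push_cast
  field_simp
  linear_combination 2 * gaussSign α * (gaussNorm α : ℂ) ^ (-s) * (α.im : ℂ) ^ 2 * Complex.I_sq

lemma hasSum_odd_int_prod {E : Type*} [AddCommMonoid E] [TopologicalSpace E] [ContinuousAdd E]
    [RegularSpace E] {g : ℤ × ℤ → E} {a : E} (hg : HasSum g a)
    (hg0 : ∀ v : ℤ × ℤ, (v.1 + v.2) % 2 = 0 → g v = 0) :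
    HasSum (fun v : ℤ × ℤ ↦ g (2 * v.1 + 1, 2 * v.2) + g (2 * v.1, 2 * v.2 + 1)) a := by
  let i : (ℤ × ℤ) × Bool → ℤ × ℤ := fun x ↦
    if x.2 then (2 * x.1.1 + 1, 2 * x.1.2) else (2 * x.1.1, 2 * x.1.2 + 1)
  have hi : Function.Injective i := by
    rintro ⟨⟨a, b⟩, _ | _⟩ ⟨⟨c, d⟩, _ | _⟩ h <;> simp [i] at h ⊢ <;> omega
  have hrange : ∀ v ∉ Set.range i, g v = 0 := by
    rintro ⟨a, b⟩ hv
    refine hg0 _ (by_contra fun hodd ↦ hv ?_)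
    rcases Int.emod_two_eq_zero_or_one a with ha | ha
    · exact ⟨((a / 2, b / 2), false), by simp [i]; omega⟩
    · exact ⟨((a / 2, b / 2), true), by simp [i]; omega⟩
  refine ((hi.hasSum_iff hrange).2 hg).prod_fiberwise fun v ↦ ?_
  simpa [i] using hasSum_fintype fun b ↦ (g ∘ i) (v, b)

lemma hasSum_gaussSign_mul_heckeTerm {s : ℂ} (hs : 1 < s.re) :
    HasSum (fun v : ℤ × ℤ ↦ (gaussSign ⟨v.1, v.2⟩ : ℂ) * heckeTerm s v.1 v.2)
      (∑' α, heckeSummand s α) := by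
  have hsum := (summable_norm_heckeSummand hs).of_norm.hasSum
  have hstar : HasSum (fun α ↦ heckeSummand s (star α)) (∑' α, heckeSummand s α) :=
    (Equiv.hasSum_iff (Equiv.mk star star star_star star_star)).2 hsum
  have hhalf := (hsum.add hstar).mul_left (1 / 2)
  simp only [heckeSummand_add_heckeSummand_star, ← mul_assoc] at hhalf
  rw [← two_mul, ← mul_assoc, one_div_mul_cancel two_ne_zero, one_mul] at hhalf
  simpa [gaussCoords, Function.comp_def] using gaussCoords.symm.hasSum_iff.2 hhalf

lemma heckeL_eq_tsum_heckeSummand {s : ℂ} (hs : 1 < s.re) :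
    heckeL s = ∑' α, heckeSummand s α := by
  have hsum := hasSum_odd_int_prod (hasSum_gaussSign_mul_heckeTerm hs) fun v hv ↦ by
    simp [gaussSign_apply, hv]
  rw [← hsum.tsum_eq, heckeL]
  refine tsum_congr fun v ↦ ?_
  have hodd : gaussSign ⟨2 * v.1 + 1, 2 * v.2⟩ = 1 := by
    rw [gaussSign_apply, if_neg (by grind), if_neg (by grind)]
  have heven : gaussSign ⟨2 * v.1, 2 * v.2 + 1⟩ = -1 := by
    rw [gaussSign_apply, if_neg (by grind), if_pos (by grind)]
  rw [hodd, heven, heckeTermDiff]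
  push_cast
  ring

end GaussianHecke

section LogarithmicDerivative

open UniqueFactorizationMonoid

lemma map_nat_eq_of_associated {F M : Type*} [Monoid M] [FunLike F M ℕ] [MonoidHomClass F M ℕ]
    (f : F) {a b : M} (h : Associated a b) : f a = f b := by
  obtain ⟨u, rfl⟩ := h
  rw [map_mul, Nat.isUnit_iff.1 (u.isUnit.map f), mul_one]

/-- The primes of a normalization monoid up to units, represented by their normalized elements. -/
abbrev NormalizedPrime (R : Type*) [CommMonoidWithZero R] [NormalizationMonoid R] : Type _ :=
  {π : R // Prime π ∧ normalize π = π}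

variable {R : Type*} [CommMonoidWithZero R] [NormalizationMonoid R] (N : R →*₀ ℕ)

/-- The term at `π ^ (k + 1)` of minus the logarithmic derivative of the Euler product
`∏ (1 - f π)⁻¹`, where `f` depends on `s` through the factor `N ^ (-s)`. -/
noncomputable def logDerivTerm (f : R →*₀ ℂ) (x : NormalizedPrime R × ℕ) : ℂ :=
  Real.log (N x.1) * f x.1 ^ (x.2 + 1)

variable [UniqueFactorizationMonoid R] {N}

lemma log_map_eq_sum_normalizedFactors (hN : ∀ a, N a = 0 → a = 0) {a : R} (ha : a ≠ 0) :
    Real.log (N a) = ((normalizedFactors a).map fun p ↦ Real.log (N p)).sum := by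
  have hne : ∀ x ∈ (normalizedFactors a).map fun p ↦ (N p : ℝ), x ≠ 0 := by
    simp only [Multiset.mem_map, forall_exists_index, and_imp, forall_apply_eq_imp_iff₂]
    exact fun p hp ↦ mod_cast mt (hN p) (ne_zero_of_mem_normalizedFactors hp)
  rw [← map_nat_eq_of_associated N (prod_normalizedFactors ha), map_multiset_prod,
    Nat.cast_multiset_prod, Multiset.map_map]
  exact (Real.log_multiset_prod hne).trans (by rw [Multiset.map_map]; rfl)

open Classical in
lemma hasSum_count_normalizedFactors_mul_log (hN : ∀ a, N a = 0 → a = 0) {a : R} (ha : a ≠ 0) :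
    HasSum (fun π : NormalizedPrime R ↦ (normalizedFactors a).count (π : R) * Real.log (N π))
      (Real.log (N a)) := by
  have hprime : ∀ p ∈ (normalizedFactors a).toFinset, Prime p ∧ normalize p = p := fun p hp ↦
    ⟨prime_of_normalized_factor p (Multiset.mem_toFinset.1 hp),
      normalize_normalized_factor p (Multiset.mem_toFinset.1 hp)⟩
  rw [log_map_eq_sum_normalizedFactors hN ha, Finset.sum_multiset_map_count]
  simp only [nsmul_eq_mul]
  rw [← Finset.sum_subtype_of_mem _ hprime]
  refine hasSum_sum_of_ne_finset_zero fun π hπ ↦ ?_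
  rw [Finset.mem_subtype, Multiset.mem_toFinset] at hπ
  rw [Multiset.count_eq_zero_of_notMem hπ, Nat.cast_zero, zero_mul]

open Classical in
lemma NormalizedPrime.pow_dvd_iff (π : NormalizedPrime R) {a : R} (ha : a ≠ 0) (k : ℕ) :
    (π : R) ^ k ∣ a ↔ k ≤ (normalizedFactors a).count (π : R) := by
  rw [pow_dvd_iff_le_emultiplicity,
    emultiplicity_eq_count_normalizedFactors π.2.1.irreducible ha, π.2.2]
  exact Nat.cast_le

open Classical in
lemma hasSum_ite_pow_dvd_log (hN : ∀ a, N a = 0 → a = 0) {a : R} (ha : a ≠ 0) :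
    HasSum (fun x : NormalizedPrime R × ℕ ↦
      if (x.1 : R) ^ (x.2 + 1) ∣ a then Real.log (N x.1) else 0) (Real.log (N a)) := by
  have hfiber (π : NormalizedPrime R) :
      HasSum (fun k : ℕ ↦ if (π : R) ^ (k + 1) ∣ a then Real.log (N π) else 0)
        ((normalizedFactors a).count (π : R) * Real.log (N π)) := by
    simp only [π.pow_dvd_iff ha, Nat.add_one_le_iff, ← Finset.mem_range]
    have hsum := hasSum_sum_of_ne_finset_zero (L := .unconditional ℕ)
      (f := fun k ↦ if k ∈ Finset.range ((normalizedFactors a).count (π : R)) then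
        Real.log (N π) else 0) fun k hk ↦ if_neg hk
    rwa [Finset.sum_congr rfl fun k hk ↦ if_pos hk, Finset.sum_const, Finset.card_range,
      nsmul_eq_mul] at hsum
  have htotal := hasSum_count_normalizedFactors_mul_log hN ha
  have hsummable : Summable fun x : NormalizedPrime R × ℕ ↦
      if (x.1 : R) ^ (x.2 + 1) ∣ a then Real.log (N x.1) else 0 := by
    refine (summable_prod_of_nonneg fun x ↦ ?_).2
      ⟨fun π ↦ (hfiber π).summable, htotal.summable.congr fun π ↦ (hfiber π).tsum_eq.symm⟩
    exact ite_nonneg (Real.log_natCast_nonneg _) le_rfl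
  exact (hsummable.hasSum.prod_fiberwise hfiber).unique htotal ▸ hsummable.hasSum

open Classical in
lemma hasSum_ite_pow_dvd_log_mul {f : R →*₀ ℂ} (hf : Summable fun a ↦ ‖f a‖)
    (hterm : Summable fun x ↦ ‖logDerivTerm N f x‖) :
    HasSum (fun y : R × (NormalizedPrime R × ℕ) ↦
      ((if (y.2.1 : R) ^ (y.2.2 + 1) ∣ y.1 then Real.log (N y.2.1) else 0 : ℝ) : ℂ) * f y.1)
      ((∑' x, logDerivTerm N f x) * ∑' a, f a) := by
  let i : (NormalizedPrime R × ℕ) × R → R × (NormalizedPrime R × ℕ) := fun z ↦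
    ((z.1.1 : R) ^ (z.1.2 + 1) * z.2, z.1)
  have hi : Function.Injective i := by
    rintro ⟨⟨π, k⟩, b⟩ ⟨⟨π', k'⟩, b'⟩ h
    simp only [i, Prod.mk.injEq] at h
    obtain ⟨hb, rfl, rfl⟩ := h
    rw [mul_left_cancel₀ (pow_ne_zero _ π.2.1.ne_zero) hb]
  have hprod : HasSum (fun z : (NormalizedPrime R × ℕ) × R ↦ logDerivTerm N f z.1 * f z.2)
      ((∑' x, logDerivTerm N f x) * ∑' a, f a) := by
    rw [tsum_mul_tsum_of_summable_norm hterm hf]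
    exact (summable_mul_of_summable_norm hterm hf).hasSum
  refine (hi.hasSum_iff ?_).1 (hprod.congr_fun ?_)
  · rintro ⟨a, π, k⟩ hx
    rw [if_neg, Complex.ofReal_zero, zero_mul]
    rintro ⟨b, hb⟩
    exact hx ⟨((π, k), b), Prod.ext hb.symm rfl⟩
  · rintro ⟨⟨π, k⟩, b⟩
    simp only [i, Function.comp, dvd_mul_right, if_true, logDerivTerm, map_mul, map_pow]
    ring

theorem hasSum_log_mul_of_logDerivTerm (hN : ∀ a, N a = 0 → a = 0) {f : R →*₀ ℂ}
    (hf : Summable fun a ↦ ‖f a‖) (hterm : Summable fun x ↦ ‖logDerivTerm N f x‖) :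
    HasSum (fun a ↦ (Real.log (N a) : ℂ) * f a) ((∑' x, logDerivTerm N f x) * ∑' a, f a) := by
  classical
  refine (hasSum_ite_pow_dvd_log_mul hf hterm).prod_fiberwise fun a ↦ ?_
  rcases eq_or_ne a 0 with rfl | ha
  · simp [hasSum_zero]
  · exact (Complex.hasSum_ofReal.2 (hasSum_ite_pow_dvd_log hN ha)).mul_right (f a)

end LogarithmicDerivative

section HeckeLogarithmicDerivative

noncomputable instance : NormalizationMonoid GaussianInt :=
  UniqueFactorizationMonoid.strongNormalizationMonoid.toNormalizationMonoid

lemma two_le_gaussNorm {π : GaussianInt} (hπ : Prime π) : 2 ≤ gaussNorm π := by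
  have h0 := mt gaussNorm_eq_zero.1 hπ.ne_zero
  have h1 := mt gaussNorm_eq_one.1 hπ.not_isUnit
  omega

lemma summable_log_mul_rpow_neg {ι : Type*} {N : ι → ℕ} {σ τ : ℝ} (hστ : τ < σ)
    (h : Summable fun i ↦ (N i : ℝ) ^ (-τ)) :
    Summable fun i ↦ Real.log (N i) * (N i : ℝ) ^ (-σ) := by
  have hε : 0 < σ - τ := sub_pos.2 hστ
  refine (h.mul_left (1 / (σ - τ))).of_nonneg_of_le
    (fun i ↦ mul_nonneg (Real.log_natCast_nonneg _) (by positivity)) fun i ↦ ?_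
  rcases (N i).eq_zero_or_pos with hN | hN
  · rw [hN, Nat.cast_zero, Real.log_zero, zero_mul]
    positivity
  have hN' : 0 < (N i : ℝ) := mod_cast hN
  calc Real.log (N i) * (N i : ℝ) ^ (-σ)
      ≤ (N i : ℝ) ^ (σ - τ) / (σ - τ) * (N i : ℝ) ^ (-σ) := by
        gcongr
        exact Real.log_le_rpow_div hN'.le hε
    _ = 1 / (σ - τ) * ((N i : ℝ) ^ (σ - τ) * (N i : ℝ) ^ (-σ)) := by ring
    _ = 1 / (σ - τ) * (N i : ℝ) ^ (-τ) := by
        rw [← Real.rpow_add hN']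
        ring_nf

lemma summable_log_gaussNorm_mul_rpow_neg {σ : ℝ} (hσ : 1 < σ) :
    Summable fun π : NormalizedPrime GaussianInt ↦
      Real.log (gaussNorm π) * (gaussNorm π : ℝ) ^ (-σ) := by
  obtain ⟨τ, hτ, hτσ⟩ := exists_between hσ
  exact (summable_log_mul_rpow_neg hτσ (summable_gaussNorm_rpow_neg hτ)).comp_injective
    Subtype.val_injective

lemma summable_log_gaussNorm_mul_rpow_neg_mul_geometric {σ : ℝ} (hσ : 1 < σ) :
    Summable fun x : NormalizedPrime GaussianInt × ℕ ↦
      Real.log (gaussNorm x.1) * (gaussNorm x.1 : ℝ) ^ (-σ) * (1 / 2) ^ x.2 :=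
  (summable_log_gaussNorm_mul_rpow_neg hσ).mul_of_nonneg summable_geometric_two
    (fun _ ↦ mul_nonneg (Real.log_natCast_nonneg _) (by positivity)) fun _ ↦ by positivity

lemma norm_log_mul_heckeSummand_pow_le {s : ℂ} {σ : ℝ} (hσ : 1 ≤ σ) (hs : σ ≤ s.re)
    {π : GaussianInt} (hπ : Prime π) (j k : ℕ) :
    ‖(Real.log (gaussNorm π) : ℂ) * heckeSummand s π ^ (j + k)‖ ≤
      Real.log (gaussNorm π) * (gaussNorm π : ℝ) ^ (-(σ * j)) * (1 / 2) ^ k := by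
  have hN : (2 : ℝ) ≤ gaussNorm π := mod_cast two_le_gaussNorm hπ
  have hlog := Real.log_natCast_nonneg (gaussNorm π)
  have hle := norm_heckeSummand_le hs π
  have hhalf : (gaussNorm π : ℝ) ^ (-σ) ≤ 1 / 2 :=
    calc (gaussNorm π : ℝ) ^ (-σ) ≤ (gaussNorm π : ℝ) ^ (-1 : ℝ) :=
          Real.rpow_le_rpow_of_exponent_le (by linarith) (by linarith)
      _ ≤ 1 / 2 := by
          rw [Real.rpow_neg_one, one_div]
          exact inv_anti₀ two_pos hN
  rw [norm_mul, norm_pow, Complex.norm_real, Real.norm_of_nonneg hlog, pow_add, mul_assoc,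
    ← neg_mul, Real.rpow_mul_natCast (by positivity)]
  gcongr
  exact hle.trans hhalf

lemma summable_norm_logDerivTerm_heckeSummand {s : ℂ} (hs : 1 < s.re) :
    Summable fun x ↦ ‖logDerivTerm gaussNorm (heckeSummand s) x‖ := by
  refine (summable_log_gaussNorm_mul_rpow_neg_mul_geometric hs).of_nonneg_of_le
    (fun _ ↦ norm_nonneg _) fun x ↦ ?_
  rw [logDerivTerm, add_comm x.2]
  simpa using norm_log_mul_heckeSummand_pow_le hs.le le_rfl x.1.2.1 1 x.2

lemma hasDerivAt_heckeSummand (α : GaussianInt) (s : ℂ) :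
    HasDerivAt (fun s ↦ heckeSummand s α)
      (-((Real.log (gaussNorm α) : ℂ) * heckeSummand s α)) s := by
  rcases eq_or_ne α 0 with rfl | hα
  · simpa using hasDerivAt_const s (0 : ℂ)
  have hN : (gaussNorm α : ℂ) ≠ 0 := mod_cast mt gaussNorm_eq_zero.1 hα
  refine (((hasDerivAt_neg s).const_cpow (Or.inl hN)).const_mul (heckeChar α)).congr_deriv ?_
  rw [Complex.ofReal_log (by positivity), heckeSummand_apply]
  push_cast
  ring

lemma hasSum_deriv_heckeL {s : ℂ} (hs : 1 < s.re) :
    HasSum (fun α ↦ -((Real.log (gaussNorm α) : ℂ) * heckeSummand s α)) (deriv heckeL s) := by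
  obtain ⟨σ, hσ, hσs⟩ := exists_between hs
  have hU : IsOpen {z : ℂ | σ < z.re} := isOpen_lt continuous_const Complex.continuous_re
  have heq : (fun w ↦ ∑' α, heckeSummand w α) =ᶠ[𝓝 s] heckeL := by
    filter_upwards [hU.mem_nhds hσs] with w hw
    exact (heckeL_eq_tsum_heckeSummand (hσ.trans hw)).symm
  have hderiv := Complex.hasSum_deriv_of_summable_norm (F := fun α s ↦ heckeSummand s α)
    (summable_gaussNorm_rpow_neg hσ)
    (fun α z _ ↦ (hasDerivAt_heckeSummand α z).differentiableAt.differentiableWithinAt) hU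
    (fun α w hw ↦ norm_heckeSummand_le (le_of_lt hw) α) hσs
  rw [heq.deriv_eq] at hderiv
  exact hderiv.congr_fun fun α ↦ (hasDerivAt_heckeSummand α s).deriv.symm

lemma tsum_logDerivTerm_mul_heckeL {s : ℂ} (hs : 1 < s.re) :
    (∑' x, logDerivTerm gaussNorm (heckeSummand s) x) * heckeL s = -deriv heckeL s := by
  rw [heckeL_eq_tsum_heckeSummand hs]
  refine (hasSum_log_mul_of_logDerivTerm (fun _ ↦ gaussNorm_eq_zero.1)
    (summable_norm_heckeSummand hs) (summable_norm_logDerivTerm_heckeSummand hs)).unique ?_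
  simpa using (hasSum_deriv_heckeL hs).neg

end HeckeLogarithmicDerivative

section GaussianPrimes

lemma exists_prime_dvd_natCast {R : Type*} [CommSemiring R] {π : R} (hπ : Prime π) {n : ℕ}
    (hn : n ≠ 0) (h : π ∣ n) : ∃ q : ℕ, q.Prime ∧ π ∣ q := by
  rw [← Nat.prod_primeFactorsList hn, Nat.cast_list_prod, hπ.dvd_prod_iff] at h
  obtain ⟨_, hx, hdvd⟩ := h
  obtain ⟨q, hq, rfl⟩ := List.mem_map.1 hx
  exact ⟨q, Nat.prime_of_mem_primeFactorsList hq, hdvd⟩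

/-- The class of a prime element up to units. -/
def NormalizedPrime.ofPrime {R : Type*} [CommMonoidWithZero R] [NormalizationMonoid R] {q : R}
    (hq : Prime q) : NormalizedPrime R :=
  ⟨normalize q, (normalize_associated q).symm.prime hq, normalize_idem q⟩

lemma NormalizedPrime.eq_ofPrime {R : Type*} [CommMonoidWithZero R] [IsCancelMulZero R]
    [NormalizationMonoid R] {q : R} (hq : Prime q) {π : NormalizedPrime R} (h : (π : R) ∣ q) :
    π = NormalizedPrime.ofPrime hq :=
  Subtype.ext <| π.2.2.symm.trans <|
    normalize_eq_normalize_iff_associated.2 (π.2.1.associated_of_dvd hq h)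

lemma natCast_gaussNorm (α : GaussianInt) : (gaussNorm α : GaussianInt) = α * star α := by
  rw [← Int.cast_natCast, intCast_gaussNorm, ← Zsqrtd.norm_eq_mul_conj, Zsqrtd.norm_def]
  ring_nf

lemma gaussNorm_natCast (n : ℕ) : gaussNorm n = n ^ 2 := by
  zify
  simp [intCast_gaussNorm]

lemma prime_of_prime_gaussNorm {α : GaussianInt} (hα : (gaussNorm α).Prime) : Prime α :=
  Irreducible.prime
    { not_isUnit := fun h ↦ hα.ne_one (gaussNorm_eq_one.2 h)
      isUnit_or_isUnit := by
        rintro x y rfl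
        rw [map_mul] at hα
        rw [← gaussNorm_eq_one, ← gaussNorm_eq_one, or_comm]
        exact (Nat.prime_mul_iff.1 hα).imp And.right And.right }

lemma gaussNorm_eq_gaussNorm_iff {α : GaussianInt} (hα : (gaussNorm α).Prime)
    (hα' : (gaussNorm (star α)).Prime) {π : NormalizedPrime GaussianInt} :
    gaussNorm π = gaussNorm α ↔ π = .ofPrime (prime_of_prime_gaussNorm hα) ∨
      π = .ofPrime (prime_of_prime_gaussNorm hα') := by
  constructor
  · intro h
    have hdvd : (π : GaussianInt) ∣ α * star α := by
      rw [← natCast_gaussNorm, ← h, natCast_gaussNorm]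
      exact dvd_mul_right _ _
    exact (π.2.1.dvd_or_dvd hdvd).imp (NormalizedPrime.eq_ofPrime _) (NormalizedPrime.eq_ofPrime _)
  · rintro (rfl | rfl)
    · exact map_nat_eq_of_associated gaussNorm (normalize_associated α)
    · exact (map_nat_eq_of_associated gaussNorm (normalize_associated _)).trans (gaussNorm_star α)

lemma eq_normalize_natCast_of_not_prime_gaussNorm (π : NormalizedPrime GaussianInt)
    (hπ : ¬(gaussNorm π).Prime) :
    ∃ q : ℕ, gaussNorm π = q ^ 2 ∧ (π : GaussianInt) = normalize (q : GaussianInt) := by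
  have hdvd : (π : GaussianInt) ∣ (gaussNorm π : ℕ) := by
    rw [natCast_gaussNorm]
    exact dvd_mul_right _ _
  obtain ⟨q, hq, β, hβ⟩ :=
    exists_prime_dvd_natCast π.2.1 (mt gaussNorm_eq_zero.1 π.2.1.ne_zero) hdvd
  have hmul : gaussNorm π * gaussNorm β = q ^ 2 := by rw [← map_mul, ← hβ, gaussNorm_natCast]
  obtain ⟨k, hk, hNπ⟩ := (Nat.dvd_prime_pow hq).1 (Dvd.intro _ hmul)
  have hk2 : k = 2 := by
    have := two_le_gaussNorm π.2.1
    interval_cases k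
    · rw [pow_zero] at hNπ
      omega
    · exact absurd (by rwa [hNπ, pow_one]) hπ
    · rfl
  subst hk2
  have hβ_unit : gaussNorm β = 1 :=
    Nat.eq_of_mul_eq_mul_left (pow_pos hq.pos 2) (by rw [← hNπ, hmul, hNπ, mul_one])
  have hassoc : Associated (π : GaussianInt) q := by
    rw [hβ]
    exact associated_mul_unit_right _ _ (gaussNorm_eq_one.1 hβ_unit)
  exact ⟨q, hNπ, by rw [← normalize_eq_normalize_iff_associated.2 hassoc, π.2.2]⟩

lemma heckeChar_eq_one_of_isUnit {u : GaussianInt} (hu : IsUnit u) : heckeChar u = 1 := by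
  have hnorm := intCast_gaussNorm u
  rw [gaussNorm_eq_one.2 hu, Nat.cast_one] at hnorm
  rw [heckeChar_apply, gaussNorm_eq_one.2 hu]
  obtain ⟨x, y⟩ := u
  simp only at hnorm
  have hx : -1 ≤ x ∧ x ≤ 1 := ⟨by nlinarith [sq_nonneg y], by nlinarith [sq_nonneg y]⟩
  have hy : -1 ≤ y ∧ y ≤ 1 := ⟨by nlinarith [sq_nonneg x], by nlinarith [sq_nonneg x]⟩
  obtain ⟨hx0, hx1⟩ := hx
  obtain ⟨hy0, hy1⟩ := hy
  interval_cases x <;> interval_cases y <;>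
    first
    | (exfalso; norm_num at hnorm; done)
    | simp [gaussSign_apply, GaussianInt.toComplex_def]

lemma heckeChar_eq_of_associated {α β : GaussianInt} (h : Associated α β) :
    heckeChar α = heckeChar β := by
  obtain ⟨u, rfl⟩ := h
  rw [map_mul, heckeChar_eq_one_of_isUnit u.isUnit, mul_one]

lemma heckeSummand_eq_of_associated (s : ℂ) {α β : GaussianInt} (h : Associated α β) :
    heckeSummand s α = heckeSummand s β := by
  rw [heckeSummand_apply, heckeSummand_apply, heckeChar_eq_of_associated h,
    map_nat_eq_of_associated gaussNorm h]

lemma heckeSummand_ofPrime (s : ℂ) {π : GaussianInt} (hπ : Prime π) :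
    heckeSummand s (NormalizedPrime.ofPrime hπ : GaussianInt) = heckeSummand s π :=
  heckeSummand_eq_of_associated s (normalize_associated π)

lemma not_associated_star {α : GaussianInt} (hα : (gaussNorm α).Prime) (hodd : gaussSign α ≠ 0) :
    ¬Associated α (star α) := by
  intro h
  have hchar := heckeChar_eq_of_associated h
  have hN : (gaussNorm α : ℂ) ≠ 0 := mod_cast hα.ne_zero
  rw [heckeChar_apply, heckeChar_apply, gaussSign_star, gaussNorm_star,
    mul_right_inj' (mod_cast hodd), div_left_inj' hN, ← map_pow, ← map_pow,
    GaussianInt.toComplex_inj, sq_eq_sq_iff_eq_or_eq_neg] at hchar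
  have hprime : Prime (α.re ^ 2 + α.im ^ 2) := by
    rw [← intCast_gaussNorm]
    exact Nat.prime_iff_prime_int.1 hα
  rcases hchar with h | h
  · have him : α.im = 0 := by
      have := congrArg Zsqrtd.im h
      rw [Zsqrtd.im_star] at this
      omega
    simp [him] at hprime
  · have hre : α.re = 0 := by
      have := congrArg Zsqrtd.re h
      rw [Zsqrtd.re_neg, Zsqrtd.re_star] at this
      omega
    simp [hre] at hprime

lemma gaussSign_eq_zero_of_gaussNorm_mod_four_ne_one {α : GaussianInt}
    (hα : gaussNorm α % 4 ≠ 1) : gaussSign α = 0 := by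
  refine if_pos (by_contra fun hodd ↦ hα ?_)
  have hN := intCast_gaussNorm α
  rcases Int.even_or_odd' α.re with ⟨x, hx | hx⟩ <;>
    rcases Int.even_or_odd' α.im with ⟨y, hy | hy⟩ <;>
    rw [hx, hy] at hN <;> ring_nf at hN <;> omega

end GaussianPrimes

section SplitPrimes

/-- The function which is `log p` at the primes `p ≡ 1 (mod 4)`, those that split in `ℤ[i]`, and
`0` elsewhere. -/
noncomputable def splitLog (n : ℕ) : ℝ := if n.Prime ∧ n % 4 = 1 then Real.log n else 0

/-- Half the deviation of `-A_p` from its mean `2` over the primes `p ≡ 1 (mod 4)`; it equals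
`(a² - b²) / p` where `p = a² + b²` with `a` odd. -/
noncomputable def nagaoDeviation (n : ℕ) : ℝ := -nagaoAverage n / 2 - 1

lemma exists_nagaoDeviation_eq {p : ℕ} (hp : p.Prime) (hp4 : p % 4 = 1) :
    ∃ α : GaussianInt, gaussSign α = 1 ∧ gaussNorm α = p ∧
      nagaoDeviation p = ((α.re : ℝ) ^ 2 - (α.im : ℝ) ^ 2) / p := by
  have := Fact.mk hp
  obtain ⟨a, b, hsum, ha, hab⟩ :=
    exists_jacobsthalSum_one_eq_two_mul (F := ZMod p) (by rwa [ZMod.card])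
  rw [ZMod.card] at hab
  have hnorm : gaussNorm ⟨a, b⟩ = p := by
    zify
    rw [intCast_gaussNorm, hab]
  refine ⟨⟨a, b⟩, ?_, hnorm, ?_⟩
  · have hb : Even b := by
      have hodd : Odd (a ^ 2 + b ^ 2) := by
        rw [← hab, Int.odd_iff]
        omega
      simpa [Int.odd_add, ha.pow, Int.even_pow] using hodd
    rw [Int.odd_iff] at ha
    rw [Int.even_iff] at hb
    rw [gaussSign_apply, if_neg (by grind), if_neg (by grind)]
  · have hp0 : (p : ℝ) ≠ 0 := mod_cast hp.ne_zero
    have habR : (p : ℝ) = (a : ℝ) ^ 2 + (b : ℝ) ^ 2 := mod_cast hab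
    rw [nagaoDeviation, neg_nagaoAverage_eq p (by rintro rfl; omega), hsum]
    push_cast
    field_simp
    rw [habR]
    ring

lemma abs_nagaoDeviation_le_one {p : ℕ} (hp : p.Prime) (hp4 : p % 4 = 1) :
    |nagaoDeviation p| ≤ 1 := by
  obtain ⟨α, -, hα, heq⟩ := exists_nagaoDeviation_eq hp hp4
  have hsq := realCast_gaussNorm α
  rw [hα] at hsq
  rw [heq, hsq, abs_div, abs_of_nonneg (by positivity : 0 ≤ (α.re : ℝ) ^ 2 + (α.im : ℝ) ^ 2)]
  refine div_le_one_of_le₀ (abs_le.2 ⟨?_, ?_⟩) (by positivity) <;>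
    nlinarith [sq_nonneg (α.re : ℝ), sq_nonneg (α.im : ℝ)]

lemma tsum_heckeSummand_gaussNorm_fiber {p : ℕ} (hp : p.Prime) (hp4 : p % 4 = 1) (s : ℂ) :
    ∑' π : (fun π : NormalizedPrime GaussianInt ↦ gaussNorm π) ⁻¹' {p}, heckeSummand s π.1 =
      2 * (nagaoDeviation p * (p : ℂ) ^ (-s)) := by
  classical
  obtain ⟨α, hsign, rfl, hdev⟩ := exists_nagaoDeviation_eq hp hp4
  have hp' : (gaussNorm (star α)).Prime := (gaussNorm_star α).symm ▸ hp
  set π₁ := NormalizedPrime.ofPrime (prime_of_prime_gaussNorm hp)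
  set π₂ := NormalizedPrime.ofPrime (prime_of_prime_gaussNorm hp')
  have hne : π₁ ≠ π₂ := fun h ↦ not_associated_star hp (by simp [hsign])
    (normalize_eq_normalize_iff_associated.1 (congrArg Subtype.val h))
  have hfiber : (fun π : NormalizedPrime GaussianInt ↦ gaussNorm π) ⁻¹' {gaussNorm α} =
      (({π₁, π₂} : Finset (NormalizedPrime GaussianInt)) : Set _) := by
    ext π
    simpa using gaussNorm_eq_gaussNorm_iff hp hp'
  have hN : (gaussNorm α : ℂ) ≠ 0 := mod_cast hp.ne_zero
  have hcast : (((α.re : ℝ) ^ 2 + (α.im : ℝ) ^ 2 : ℝ) : ℂ) = gaussNorm α := by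
    rw [← realCast_gaussNorm]
    norm_cast
  rw [hfiber, Finset.tsum_subtype' _ fun π : NormalizedPrime GaussianInt ↦ heckeSummand s π,
    Finset.sum_pair hne, heckeSummand_ofPrime, heckeSummand_ofPrime,
    heckeSummand_add_heckeSummand_star, hsign, heckeTerm, hcast, Complex.cpow_sub _ _ hN,
    Complex.cpow_one, hdev]
  push_cast
  ring

end SplitPrimes

section LogDerivDecomposition

/-- The Gaussian primes of residue degree one, up to associates: those whose norm is prime. Every
other Gaussian prime is associated to a rational prime. -/
def degreeOnePrimes : Set (NormalizedPrime GaussianInt) := {π | (gaussNorm π).Prime}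

lemma continuous_heckeSummand (α : GaussianInt) : Continuous fun s ↦ heckeSummand s α :=
  continuous_iff_continuousAt.2 fun s ↦ (hasDerivAt_heckeSummand α s).continuousAt

lemma continuous_logDerivTerm_heckeSummand (x : NormalizedPrime GaussianInt × ℕ) :
    Continuous fun s ↦ logDerivTerm gaussNorm (heckeSummand s) x :=
  continuous_const.mul ((continuous_heckeSummand _).pow _)

lemma summable_log_sq_mul_rpow_neg_one :
    Summable fun q : ℕ ↦ Real.log (q ^ 2 : ℕ) * ((q ^ 2 : ℕ) : ℝ) ^ (-1 : ℝ) := by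
  refine summable_log_mul_rpow_neg (τ := 3 / 4) (by norm_num)
    ((Real.summable_nat_rpow.2 (by norm_num : -(3 / 2 : ℝ) < -1)).congr fun q ↦ ?_)
  rw [Nat.cast_pow, ← Real.rpow_natCast, ← Real.rpow_mul (Nat.cast_nonneg q)]
  norm_num

lemma summable_log_mul_rpow_neg_one_compl_degreeOnePrimes :
    Summable fun π : ↥degreeOnePrimesᶜ ↦
      Real.log (gaussNorm π.1) * (gaussNorm π.1 : ℝ) ^ (-1 : ℝ) := by
  choose q hqN hq using fun π : ↥degreeOnePrimesᶜ ↦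
    eq_normalize_natCast_of_not_prime_gaussNorm π.1 π.2
  have hinj : Function.Injective q := fun π ρ h ↦
    Subtype.ext (Subtype.ext (by rw [hq, hq, h]))
  refine (summable_log_sq_mul_rpow_neg_one.comp_injective hinj).congr fun π ↦ ?_
  rw [hqN, Function.comp_apply]

lemma continuousOn_tsum_logDerivTerm_compl_degreeOnePrimes :
    ContinuousOn (fun s ↦ ∑' π : ↥degreeOnePrimesᶜ,
      logDerivTerm gaussNorm (heckeSummand s) (π.1, 0)) {s | 1 ≤ s.re} := by
  refine continuousOn_tsum (fun π ↦ (continuous_logDerivTerm_heckeSummand _).continuousOn)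
    summable_log_mul_rpow_neg_one_compl_degreeOnePrimes fun π s hs ↦ ?_
  simpa [logDerivTerm] using norm_log_mul_heckeSummand_pow_le le_rfl hs π.1.2.1 1 0

lemma continuousOn_tsum_logDerivTerm_add_one :
    ContinuousOn (fun s ↦ ∑' x : NormalizedPrime GaussianInt × ℕ,
      logDerivTerm gaussNorm (heckeSummand s) (x.1, x.2 + 1)) {s | 1 ≤ s.re} := by
  refine continuousOn_tsum (fun x ↦ (continuous_logDerivTerm_heckeSummand _).continuousOn)
    (summable_log_gaussNorm_mul_rpow_neg_mul_geometric one_lt_two) fun x s hs ↦ ?_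
  have hexp : x.2 + 1 + 1 = 2 + x.2 := by ring
  simpa [logDerivTerm, hexp] using norm_log_mul_heckeSummand_pow_le le_rfl hs x.1.2.1 2 x.2

lemma tsum_logDerivTerm_gaussNorm_fiber (n : ℕ) (s : ℂ) :
    ∑' π : (fun π : NormalizedPrime GaussianInt ↦ gaussNorm π) ⁻¹' {n},
      degreeOnePrimes.indicator
        (fun π ↦ logDerivTerm gaussNorm (heckeSummand s) (π, 0)) π.1 =
      2 * LSeries.term (fun n ↦ ((splitLog n * nagaoDeviation n : ℝ) : ℂ)) s n := by
  by_cases hn : n.Prime ∧ n % 4 = 1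
  · have hterm (π : (fun π : NormalizedPrime GaussianInt ↦ gaussNorm π) ⁻¹' {n}) :
        degreeOnePrimes.indicator
          (fun π ↦ logDerivTerm gaussNorm (heckeSummand s) (π, 0)) π.1 =
        Real.log n * heckeSummand s π.1 := by
      have hπ : gaussNorm π.1 = n := π.2
      have hmem : π.1 ∈ degreeOnePrimes := by simpa [degreeOnePrimes, hπ] using hn.1
      rw [Set.indicator_of_mem hmem, logDerivTerm, hπ, zero_add, pow_one]
    rw [tsum_congr hterm, tsum_mul_left, tsum_heckeSummand_gaussNorm_fiber hn.1 hn.2,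
      LSeries.term_of_ne_zero hn.1.ne_zero, Complex.cpow_neg, splitLog, if_pos hn]
    push_cast
    ring
  · have hterm (π : (fun π : NormalizedPrime GaussianInt ↦ gaussNorm π) ⁻¹' {n}) :
        degreeOnePrimes.indicator
          (fun π ↦ logDerivTerm gaussNorm (heckeSummand s) (π, 0)) π.1 = 0 := by
      have hπ : gaussNorm π.1 = n := π.2
      refine Set.indicator_apply_eq_zero.2 fun hp ↦ ?_
      have hmod : gaussNorm (π.1 : GaussianInt) % 4 ≠ 1 := fun h ↦
        hn (hπ ▸ ⟨hp, h⟩)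
      have hsign := gaussSign_eq_zero_of_gaussNorm_mod_four_ne_one hmod
      simp [logDerivTerm, heckeSummand_apply, heckeChar_apply, hsign]
    rw [tsum_congr hterm, tsum_zero]
    simp [LSeries.term, splitLog, hn]

lemma tsum_logDerivTerm_degreeOnePrimes {s : ℂ}
    (hs : Summable fun π ↦ logDerivTerm gaussNorm (heckeSummand s) (π, 0)) :
    ∑' π : degreeOnePrimes,
      logDerivTerm gaussNorm (heckeSummand s) (π.1, 0) =
      2 * LSeries (fun n ↦ ((splitLog n * nagaoDeviation n : ℝ) : ℂ)) s := by
  rw [tsum_subtype _ fun π ↦ logDerivTerm gaussNorm (heckeSummand s) (π, 0),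
    ← ((hs.indicator _).hasSum.tsum_fiberwise fun π ↦ gaussNorm (π : GaussianInt)).tsum_eq,
    LSeries, ← tsum_mul_left]
  exact tsum_congr fun n ↦ tsum_logDerivTerm_gaussNorm_fiber n s

/-- The part of `-heckeL' / heckeL` coming from the inert Gaussian primes and from the proper
prime powers, which has no singularity on the line `Re s = 1`. -/
noncomputable def logDerivRemainder (s : ℂ) : ℂ :=
  (∑' π : ↥degreeOnePrimesᶜ,
    logDerivTerm gaussNorm (heckeSummand s) (π.1, 0)) +
  ∑' x : NormalizedPrime GaussianInt × ℕ, logDerivTerm gaussNorm (heckeSummand s) (x.1, x.2 + 1)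

lemma continuousOn_logDerivRemainder : ContinuousOn logDerivRemainder {s | 1 ≤ s.re} :=
  continuousOn_tsum_logDerivTerm_compl_degreeOnePrimes.add continuousOn_tsum_logDerivTerm_add_one

lemma tsum_logDerivTerm_heckeSummand_eq {s : ℂ} (hs : 1 < s.re) :
    ∑' x, logDerivTerm gaussNorm (heckeSummand s) x =
      2 * LSeries (fun n ↦ ((splitLog n * nagaoDeviation n : ℝ) : ℂ)) s + logDerivRemainder s := by
  have hsum := (summable_norm_logDerivTerm_heckeSummand hs).of_norm
  have hzero : Summable fun π ↦ logDerivTerm gaussNorm (heckeSummand s) (π, 0) :=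
    hsum.comp_injective (i := fun π ↦ (π, 0)) fun _ _ h ↦ congrArg Prod.fst h
  have hsucc : Summable fun x : NormalizedPrime GaussianInt × ℕ ↦
      logDerivTerm gaussNorm (heckeSummand s) (x.1, x.2 + 1) :=
    hsum.comp_injective (Function.injective_id.prodMap (add_left_injective 1))
  rw [hsum.tsum_prod, tsum_congr fun π ↦ (hsum.prod_factor π).tsum_eq_zero_add,
    hzero.tsum_add hsucc.prod, ← hsucc.tsum_prod, logDerivRemainder, ← add_assoc,
    ← tsum_logDerivTerm_degreeOnePrimes hzero,
    (hzero.subtype _).tsum_add_tsum_compl (hzero.subtype _)]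

end LogDerivDecomposition

section LogDeriv

lemma tendsto_sub_nhdsNE_zero {𝕜 : Type*} [NontriviallyNormedField 𝕜] (x : 𝕜) :
    Tendsto (fun z ↦ z - x) (𝓝[≠] x) (𝓝 0) :=
  tendsto_nhdsWithin_of_tendsto_nhds ((continuous_sub_right x).tendsto' x 0 (sub_self x))

variable {𝕜 : Type*} [NontriviallyNormedField 𝕜] [CompleteSpace 𝕜] {f : 𝕜 → 𝕜} {x : 𝕜}

lemma tendsto_sub_mul_logDeriv (hf : AnalyticAt 𝕜 f x) (hx : analyticOrderAt f x ≠ ⊤) :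
    Tendsto (fun z ↦ (z - x) * logDeriv f z) (𝓝[≠] x) (𝓝 (analyticOrderNatAt f x)) := by
  obtain ⟨g, hg, hgx, hfg⟩ := hf.analyticOrderAt_ne_top.1 hx
  set m := analyticOrderNatAt f x
  have hlim : Tendsto (fun z ↦ (m : 𝕜) + (z - x) * logDeriv g z) (𝓝[≠] x) (𝓝 m) := by
    have hlog : Tendsto (logDeriv g) (𝓝[≠] x) (𝓝 (logDeriv g x)) :=
      tendsto_nhdsWithin_of_tendsto_nhds (hg.deriv.continuousAt.div hg.continuousAt hgx)
    simpa using ((tendsto_sub_nhdsNE_zero x).mul hlog).const_add (m : 𝕜)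
  refine hlim.congr' ?_
  filter_upwards [nhdsWithin_le_nhds hfg.eventually_nhds,
    nhdsWithin_le_nhds hg.eventually_analyticAt,
    nhdsWithin_le_nhds (hg.continuousAt.eventually_ne hgx), self_mem_nhdsWithin]
    with z hfz hgz hgz0 hzx
  have hzx' : z - x ≠ 0 := sub_ne_zero.2 hzx
  have hpow : logDeriv (fun w ↦ (w - x) ^ m) z = m / (z - x) := by
    rw [logDeriv_fun_pow (by fun_prop), logDeriv_apply, deriv_sub_const_fun, deriv_id'',
      mul_one_div]
  have hfz' : f =ᶠ[𝓝 z] fun w ↦ (w - x) ^ m * g w := hfz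
  rw [(logDeriv_congr_nhds hfz').eq_of_nhds, logDeriv_mul (f := fun w ↦ (w - x) ^ m) z
    (pow_ne_zero m hzx') hgz0 (by fun_prop) hgz.differentiableAt, hpow]
  field_simp

/-- The order of vanishing `m` of a solution of `f' = v * f` is `lim (z - x) * v z = 0`. -/
lemma ne_zero_of_deriv_eq_mul [CharZero 𝕜] {v : 𝕜 → 𝕜} (hf : AnalyticAt 𝕜 f x)
    (hx : analyticOrderAt f x ≠ ⊤) (hv : ContinuousAt v x)
    (hfv : ∀ᶠ z in 𝓝 x, deriv f z = v z * f z) : f x ≠ 0 := by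
  have hzero : Tendsto (fun z ↦ (z - x) * v z) (𝓝[≠] x) (𝓝 0) := by
    simpa using (tendsto_sub_nhdsNE_zero x).mul (tendsto_nhdsWithin_of_tendsto_nhds hv)
  have hne : ∀ᶠ z in 𝓝[≠] x, f z ≠ 0 :=
    hf.eventually_eq_zero_or_eventually_ne_zero.resolve_left (analyticOrderAt_eq_top.not.1 hx)
  have hlog := (tendsto_sub_mul_logDeriv hf hx).congr' (f₂ := fun z ↦ (z - x) * v z) <| by
    filter_upwards [nhdsWithin_le_nhds hfv, hne] with z hz hz0
    rw [logDeriv_apply, hz, mul_div_cancel_right₀ _ hz0]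
  have horder : analyticOrderNatAt f x = 0 :=
    Nat.cast_injective (R := 𝕜) (by rw [Nat.cast_zero, tendsto_nhds_unique hlog hzero])
  rwa [← hf.analyticOrderAt_eq_zero, ← Nat.cast_analyticOrderNatAt hx, Nat.cast_eq_zero]

end LogDeriv

section LSeriesOnLine

lemma norm_LSeries_term_ofReal_le_div {f : ℕ → ℝ} (hf : ∀ n, 0 ≤ f n) {s : ℂ} (hs : 1 ≤ s.re)
    (n : ℕ) : ‖LSeries.term (fun n ↦ (f n : ℂ)) s n‖ ≤ f n / n := by
  refine (LSeries.norm_term_le_of_re_le_re _ (s := 1) hs n).trans ?_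
  rw [LSeries.norm_term_eq]
  split_ifs with hn
  · simp [hn]
  · rw [Complex.norm_real, Real.norm_of_nonneg (hf n), Complex.one_re, Real.rpow_one]

lemma continuous_LSeries_term (f : ℕ → ℂ) (n : ℕ) : Continuous fun s ↦ LSeries.term f s n :=
  continuous_iff_continuousAt.2 fun s ↦ (LSeries.hasDerivAt_term f n s).continuousAt

lemma continuousOn_LSeries_of_summable_div {f : ℕ → ℝ} (hf : ∀ n, 0 ≤ f n)
    (hsum : Summable fun n ↦ f n / n) :
    ContinuousOn (LSeries fun n ↦ (f n : ℂ)) {s | 1 ≤ s.re} :=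
  continuousOn_tsum (fun n ↦ (continuous_LSeries_term _ n).continuousOn) hsum
    fun n _ hs ↦ norm_LSeries_term_ofReal_le_div hf hs n

lemma LSeriesSummable_of_abs_le {f g : ℕ → ℝ} (hgf : ∀ n, |g n| ≤ f n) {s : ℂ}
    (hf : LSeriesSummable (fun n ↦ (f n : ℂ)) s) : LSeriesSummable (fun n ↦ (g n : ℂ)) s := by
  refine Summable.of_norm_bounded hf.norm fun n ↦ LSeries.norm_term_le s ?_
  simpa using (hgf n).trans (le_abs_self _)

open ArithmeticFunction.vonMangoldt in
/-- The higher prime powers contribute a Dirichlet series which still converges absolutely on the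
line `Re s = 1`, so that restricting `residueClass a` to the primes does not affect the pole. -/
lemma exists_LSeries_prime_residueClass_eq {q : ℕ} [NeZero q] {a : ZMod q} (ha : IsUnit a) :
    ∃ K : ℂ → ℂ, ContinuousOn K {s | 1 ≤ s.re} ∧ ∀ s, 1 < s.re →
      LSeries (fun n ↦ ((if n.Prime then residueClass a n else 0 : ℝ) : ℂ)) s =
        (q.totient : ℂ)⁻¹ / (s - 1) + K s := by
  set f : ℕ → ℝ := fun n ↦ if n.Prime then residueClass a n else 0
  set g : ℕ → ℝ := fun n ↦ if n.Prime then 0 else residueClass a n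
  have hg (n : ℕ) : 0 ≤ g n := ite_nonneg le_rfl (residueClass_nonneg a n)
  have hfg (n : ℕ) : f n = residueClass a n - g n := by
    by_cases hn : n.Prime <;> simp [f, g, hn]
  have hgsum : Summable fun n ↦ g n / n := summable_residueClass_non_primes_div a
  refine ⟨fun s ↦ LFunctionResidueClassAux a s - LSeries (fun n ↦ (g n : ℂ)) s,
    (continuousOn_LFunctionResidueClassAux a).sub (continuousOn_LSeries_of_summable_div hg hgsum),
    fun s hs ↦ ?_⟩
  have hres : LSeriesSummable (fun n ↦ (residueClass a n : ℂ)) s :=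
    LSeriesSummable_of_abscissaOfAbsConv_lt_re
      ((abscissaOfAbsConv_residueClass_le_one a).trans_lt (mod_cast hs))
  have hgs : LSeriesSummable (fun n ↦ (g n : ℂ)) s :=
    Summable.of_norm_bounded hgsum fun n ↦ norm_LSeries_term_ofReal_le_div hg hs.le n
  have hsub : (fun n ↦ (f n : ℂ)) = (fun n ↦ (residueClass a n : ℂ)) - fun n ↦ (g n : ℂ) := by
    ext n
    simp [hfg]
  have haux := eqOn_LFunctionResidueClassAux ha hs
  beta_reduce at haux ⊢
  rw [hsub, LSeries_sub hres hgs, haux]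
  ring

lemma re_LSeries_term (f : ℕ → ℝ) (n : ℕ) (σ t : ℝ) :
    (LSeries.term (fun n ↦ (f n : ℂ)) (σ + t * Complex.I) n).re =
      ‖LSeries.term (fun _ ↦ 1) σ n‖ * (f n * Real.cos (t * Real.log n)) := by
  rcases eq_or_ne n 0 with rfl | hn
  · simp
  have hn0 : (n : ℂ) ≠ 0 := mod_cast hn
  have hpow : (n : ℂ) ^ (-(σ + t * Complex.I)) =
      ((n : ℝ) ^ (-σ) : ℝ) * Complex.exp ((-(t * Real.log n) : ℝ) * Complex.I) := by
    rw [neg_add, Complex.cpow_add _ _ hn0, Complex.ofReal_cpow n.cast_nonneg,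
      Complex.cpow_def_of_ne_zero hn0 (-(t * Complex.I)), ← Complex.natCast_log]
    push_cast
    ring_nf
  rw [LSeries.term_of_ne_zero hn, LSeries.norm_term_eq, if_neg hn, div_eq_mul_inv,
    ← Complex.cpow_neg, hpow, Complex.re_ofReal_mul, Complex.re_ofReal_mul,
    Complex.exp_ofReal_mul_I_re, Real.cos_neg, norm_one, Complex.ofReal_re,
    Real.rpow_neg n.cast_nonneg]
  ring

lemma re_LSeries_comb_nonneg {f g : ℕ → ℝ} (hgf : ∀ n, |g n| ≤ f n) {σ : ℝ}
    (hf : LSeriesSummable (fun n ↦ (f n : ℂ)) σ) (t : ℝ) :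
    0 ≤ (3 * LSeries (fun n ↦ (f n : ℂ)) σ +
      4 * LSeries (fun n ↦ (g n : ℂ)) (σ + t * Complex.I) +
      LSeries (fun n ↦ (f n : ℂ)) (σ + (2 * t : ℝ) * Complex.I)).re := by
  have hft (u : ℝ) : LSeriesSummable (fun n ↦ (f n : ℂ)) (σ + u * Complex.I) :=
    hf.of_re_le_re (by simp)
  have hgt := LSeriesSummable_of_abs_le hgf (hft t)
  have hsum := ((hf.hasSum.mul_left 3).add (hgt.hasSum.mul_left 4)).add (hft (2 * t)).hasSum
  refine (Complex.hasSum_re hsum).nonneg fun n ↦ ?_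
  have hf0 := re_LSeries_term f n σ 0
  rw [Complex.ofReal_zero, zero_mul, add_zero, zero_mul, Real.cos_zero, mul_one] at hf0
  have h3 : (3 : ℂ) = (3 : ℝ) := by norm_cast
  have h4 : (4 : ℂ) = (4 : ℝ) := by norm_cast
  rw [Complex.add_re, Complex.add_re, h3, h4, Complex.re_ofReal_mul, Complex.re_ofReal_mul, hf0,
    re_LSeries_term, re_LSeries_term, mul_assoc 2 t, Real.cos_two_mul]
  set y := Real.cos (t * Real.log n)
  have hgy : -(f n * |y|) ≤ g n * y := by
    refine neg_le_of_neg_le ((neg_le_abs _).trans ?_)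
    rw [abs_mul]
    exact mul_le_mul_of_nonneg_right (hgf n) (abs_nonneg y)
  have hcomb : 0 ≤ 3 * f n + 4 * (g n * y) + f n * (2 * y ^ 2 - 1) := by
    have hfn : 0 ≤ f n := (abs_nonneg _).trans (hgf n)
    nlinarith [mul_nonneg hfn (sq_nonneg (1 - |y|)), sq_abs y]
  linarith [mul_nonneg (norm_nonneg (LSeries.term (fun _ ↦ 1) (σ : ℂ) n)) hcomb]

lemma tendsto_ofReal_add_mul_I (t : ℝ) :
    Tendsto (fun σ : ℝ ↦ (σ : ℂ) + t * Complex.I) (𝓝[>] 1)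
      (𝓝[{s | 1 < s.re}] (1 + t * Complex.I)) := by
  refine tendsto_nhdsWithin_iff.2 ⟨?_, ?_⟩
  · have hcont : Continuous fun σ : ℝ ↦ (σ : ℂ) + t * Complex.I := by fun_prop
    exact tendsto_nhdsWithin_of_tendsto_nhds (hcont.tendsto' 1 _ (by simp))
  · filter_upwards [self_mem_nhdsWithin] with σ hσ
    simpa using hσ

lemma tendsto_sub_one_mul_of_continuousOn {K : ℂ → ℂ} (hK : ContinuousOn K {s | 1 ≤ s.re})
    (t : ℝ) :
    Tendsto (fun σ : ℝ ↦ ((σ : ℂ) - 1) * K (σ + t * Complex.I)) (𝓝[>] 1) (𝓝 0) := by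
  have hsub : Tendsto (fun σ : ℝ ↦ (σ : ℂ) - 1) (𝓝[>] 1) (𝓝 0) :=
    tendsto_nhdsWithin_of_tendsto_nhds
      ((by fun_prop : Continuous fun σ : ℝ ↦ (σ : ℂ) - 1).tendsto' 1 0 (by simp))
  have hKt : Tendsto K (𝓝[{s | 1 < s.re}] (1 + t * Complex.I)) (𝓝 (K (1 + t * Complex.I))) :=
    (hK _ (by simp)).mono fun s (hs : 1 < s.re) ↦ hs.le
  simpa using hsub.mul (hKt.comp (tendsto_ofReal_add_mul_I t))

section SimplePole

variable {F K : ℂ → ℂ} {A : ℂ}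

lemma tendsto_sub_one_mul_of_eq_div_add (hK : ContinuousOn K {s | 1 ≤ s.re})
    (hF : ∀ s, 1 < s.re → F s = A / (s - 1) + K s) :
    Tendsto (fun σ : ℝ ↦ ((σ : ℂ) - 1) * F σ) (𝓝[>] 1) (𝓝 A) := by
  have hlim := (tendsto_sub_one_mul_of_continuousOn hK 0).const_add A
  rw [add_zero] at hlim
  refine hlim.congr' ?_
  filter_upwards [self_mem_nhdsWithin] with σ (hσ : 1 < σ)
  have hσ0 : (σ : ℂ) - 1 ≠ 0 := sub_ne_zero.2 (mod_cast hσ.ne')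
  rw [Complex.ofReal_zero, zero_mul, add_zero, hF σ (by simpa using hσ), mul_add,
    mul_div_cancel₀ _ hσ0]

lemma tendsto_sub_one_mul_of_eq_div_add_of_ne_zero (hK : ContinuousOn K {s | 1 ≤ s.re})
    (hF : ∀ s, 1 < s.re → F s = A / (s - 1) + K s) {t : ℝ} (ht : t ≠ 0) :
    Tendsto (fun σ : ℝ ↦ ((σ : ℂ) - 1) * F (σ + t * Complex.I)) (𝓝[>] 1) (𝓝 0) := by
  have hsub : Tendsto (fun σ : ℝ ↦ (σ : ℂ) - 1) (𝓝[>] 1) (𝓝 0) := by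
    simpa using tendsto_sub_one_mul_of_continuousOn (K := 1) continuousOn_const 0
  have hden : (1 + t * Complex.I - 1 : ℂ) ≠ 0 := by simp [ht]
  have hpole : Tendsto (fun σ : ℝ ↦ A / (σ + t * Complex.I - 1)) (𝓝[>] 1)
      (𝓝 (A / (1 + t * Complex.I - 1))) :=
    tendsto_const_nhds.div
      (((tendsto_ofReal_add_mul_I t).mono_right nhdsWithin_le_nhds).sub_const 1) hden
  have hlim := (hsub.mul hpole).add (tendsto_sub_one_mul_of_continuousOn hK t)
  rw [zero_mul, add_zero] at hlim
  refine hlim.congr' ?_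
  filter_upwards [self_mem_nhdsWithin] with σ (hσ : 1 < σ)
  rw [hF _ (by simpa using hσ), mul_add]

end SimplePole

/-- The inequality `3 + 4 cos θ + cos 2θ ≥ 0` compares the polar behaviour of a dominated Dirichlet
series at `1 + it` with the residue of the dominating one at `1`. -/
lemma three_mul_add_four_mul_re_nonneg {f g : ℕ → ℝ} (hgf : ∀ n, |g n| ≤ f n)
    (hfs : ∀ s : ℂ, 1 < s.re → LSeriesSummable (fun n ↦ (f n : ℂ)) s)
    {A B : ℂ} {K : ℂ → ℂ} (hK : ContinuousOn K {s | 1 ≤ s.re})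
    (hf : ∀ s, 1 < s.re → LSeries (fun n ↦ (f n : ℂ)) s = A / (s - 1) + K s) {t : ℝ} (ht : t ≠ 0)
    (hg : Tendsto (fun σ : ℝ ↦ ((σ : ℂ) - 1) * LSeries (fun n ↦ (g n : ℂ)) (σ + t * Complex.I))
      (𝓝[>] 1) (𝓝 B)) :
    0 ≤ (3 * A + 4 * B).re := by
  have hlim := (((tendsto_sub_one_mul_of_eq_div_add hK hf).const_mul 3).add (hg.const_mul 4)).add
    (tendsto_sub_one_mul_of_eq_div_add_of_ne_zero hK hf (mul_ne_zero two_ne_zero ht))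
  rw [add_zero] at hlim
  refine ge_of_tendsto ((Complex.continuous_re.tendsto _).comp hlim) ?_
  filter_upwards [self_mem_nhdsWithin] with σ (hσ : 1 < σ)
  have hcomb := re_LSeries_comb_nonneg hgf (hfs σ (by simpa using hσ)) t
  calc 0 ≤ (σ - 1) * _ := mul_nonneg (sub_nonneg.2 hσ.le) hcomb
    _ = _ := by
      rw [← Complex.re_ofReal_mul, Function.comp_apply]
      push_cast
      ring_nf

end LSeriesOnLine

section SplitLogSeries

lemma splitLog_nonneg (n : ℕ) : 0 ≤ splitLog n :=
  ite_nonneg (Real.log_natCast_nonneg n) le_rfl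

lemma splitLog_eq_residueClass (n : ℕ) :
    splitLog n =
      if n.Prime then ArithmeticFunction.vonMangoldt.residueClass (1 : ZMod 4) n else 0 := by
  have hmod : (n : ZMod 4) = 1 ↔ n % 4 = 1 := by
    simpa using ZMod.natCast_eq_natCast_iff' n 1 4
  by_cases hn : n.Prime <;>
    simp +contextual [splitLog, Set.indicator_apply, hmod, hn,
      ArithmeticFunction.vonMangoldt_apply_prime]

lemma exists_LSeries_splitLog_eq :
    ∃ K : ℂ → ℂ, ContinuousOn K {s | 1 ≤ s.re} ∧ ∀ s, 1 < s.re →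
      LSeries (fun n ↦ (splitLog n : ℂ)) s = (1 / 2) / (s - 1) + K s := by
  have htotient : Nat.totient 4 = 2 := by decide
  simpa only [← splitLog_eq_residueClass, htotient, Nat.cast_ofNat, one_div] using
    exists_LSeries_prime_residueClass_eq (isUnit_one : IsUnit (1 : ZMod 4))

lemma splitLog_le_vonMangoldt (n : ℕ) : splitLog n ≤ ArithmeticFunction.vonMangoldt n := by
  rw [splitLog]
  split_ifs with h
  · rw [ArithmeticFunction.vonMangoldt_apply_prime h.1]
  · exact ArithmeticFunction.vonMangoldt_nonneg

lemma LSeriesSummable_splitLog {s : ℂ} (hs : 1 < s.re) :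
    LSeriesSummable (fun n ↦ (splitLog n : ℂ)) s :=
  LSeriesSummable_of_abs_le
    (fun n ↦ (abs_of_nonneg (splitLog_nonneg n)).trans_le (splitLog_le_vonMangoldt n))
    (ArithmeticFunction.LSeriesSummable_vonMangoldt hs)

lemma abs_splitLog_mul_nagaoDeviation_le (n : ℕ) :
    |splitLog n * nagaoDeviation n| ≤ splitLog n := by
  by_cases h : n.Prime ∧ n % 4 = 1
  · rw [abs_mul, abs_of_nonneg (splitLog_nonneg n)]
    exact mul_le_of_le_one_right (splitLog_nonneg n) (abs_nagaoDeviation_le_one h.1 h.2)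
  · simp [splitLog, h]

lemma LSeriesSummable_splitLog_mul_nagaoDeviation {s : ℂ} (hs : 1 < s.re) :
    LSeriesSummable (fun n ↦ ((splitLog n * nagaoDeviation n : ℝ) : ℂ)) s :=
  LSeriesSummable_of_abs_le abs_splitLog_mul_nagaoDeviation_le (LSeriesSummable_splitLog hs)

lemma continuousAt_LSeries_splitLog_mul_nagaoDeviation {s : ℂ} (hs : 1 < s.re) :
    ContinuousAt (LSeries fun n ↦ ((splitLog n * nagaoDeviation n : ℝ) : ℂ)) s := by
  refine (LSeries_hasDerivAt ?_).continuousAt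
  refine (LSeries.abscissaOfAbsConv_le_of_forall_lt_LSeriesSummable (x := 1) fun y hy ↦
    LSeriesSummable_splitLog_mul_nagaoDeviation (by simpa using hy)).trans_lt ?_
  exact_mod_cast hs

end SplitLogSeries

section Nonvanishing

lemma analyticOnNhd_heckeL : AnalyticOnNhd ℂ heckeL {s | 3 / 4 < s.re} :=
  differentiableOn_heckeL.analyticOnNhd (isOpen_lt continuous_const Complex.continuous_re)

lemma analyticAt_heckeL {s : ℂ} (hs : 1 ≤ s.re) : AnalyticAt ℂ heckeL s :=
  analyticOnNhd_heckeL s (show 3 / 4 < s.re by linarith)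

lemma analyticOrderAt_heckeL_ne_top {s : ℂ} (hs : 1 ≤ s.re) : analyticOrderAt heckeL s ≠ ⊤ := by
  refine analyticOnNhd_heckeL.analyticOrderAt_ne_top_of_isPreconnected (x := 1)
    (convex_halfSpace_re_gt _).isPreconnected ?_ (show 3 / 4 < s.re by linarith) ?_
  · norm_num
  · rw [(analyticAt_heckeL Complex.one_re.ge).analyticOrderAt_eq_zero.2 heckeL_one_ne_zero]
    exact ENat.zero_ne_top

lemma deriv_heckeL {s : ℂ} (hs : 1 < s.re) :
    deriv heckeL s = -(2 * LSeries (fun n ↦ ((splitLog n * nagaoDeviation n : ℝ) : ℂ)) s +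
      logDerivRemainder s) * heckeL s := by
  rw [← tsum_logDerivTerm_heckeSummand_eq hs, neg_mul, tsum_logDerivTerm_mul_heckeL hs, neg_neg]

lemma heckeL_ne_zero_of_one_lt_re {s : ℂ} (hs : 1 < s.re) : heckeL s ≠ 0 := by
  have hmem : {z : ℂ | 1 < z.re} ∈ 𝓝 s :=
    (isOpen_lt continuous_const Complex.continuous_re).mem_nhds hs
  have hrem : ContinuousAt logDerivRemainder s :=
    continuousOn_logDerivRemainder.continuousAt (mem_of_superset hmem fun z (hz : 1 < z.re) ↦ hz.le)
  refine ne_zero_of_deriv_eq_mul (analyticAt_heckeL hs.le) (analyticOrderAt_heckeL_ne_top hs.le)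
    (((continuousAt_const (y := 2)).mul
      (continuousAt_LSeries_splitLog_mul_nagaoDeviation hs)).add hrem).neg ?_
  filter_upwards [hmem] with z hz using deriv_heckeL hz

lemma two_mul_LSeries_splitLog_mul_nagaoDeviation {s : ℂ} (hs : 1 < s.re) :
    2 * LSeries (fun n ↦ ((splitLog n * nagaoDeviation n : ℝ) : ℂ)) s =
      -logDeriv heckeL s - logDerivRemainder s := by
  rw [logDeriv_apply, deriv_heckeL hs, mul_div_cancel_right₀ _ (heckeL_ne_zero_of_one_lt_re hs)]
  ring

lemma tendsto_sub_one_mul_LSeries_splitLog_mul_nagaoDeviation (t : ℝ) :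
    Tendsto (fun σ : ℝ ↦ ((σ : ℂ) - 1) *
        LSeries (fun n ↦ ((splitLog n * nagaoDeviation n : ℝ) : ℂ)) (σ + t * Complex.I)) (𝓝[>] 1)
      (𝓝 (-(analyticOrderNatAt heckeL (1 + t * Complex.I) / 2))) := by
  have hs : 1 ≤ (1 + t * Complex.I).re := by simp
  have hpunctured : Tendsto (fun σ : ℝ ↦ (σ : ℂ) + t * Complex.I) (𝓝[>] 1)
      (𝓝[≠] (1 + t * Complex.I)) := by
    refine (tendsto_ofReal_add_mul_I t).mono_right (nhdsWithin_mono _ ?_)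
    rintro s hs rfl
    simp at hs
  have hlog := (tendsto_sub_mul_logDeriv (analyticAt_heckeL hs)
    (analyticOrderAt_heckeL_ne_top hs)).comp hpunctured
  have hrem := tendsto_sub_one_mul_of_continuousOn continuousOn_logDerivRemainder t
  have hlim := (hlog.add hrem).div_const 2 |>.neg
  rw [add_zero] at hlim
  refine hlim.congr' ?_
  filter_upwards [self_mem_nhdsWithin] with σ (hσ : 1 < σ)
  have hD := two_mul_LSeries_splitLog_mul_nagaoDeviation (s := σ + t * Complex.I)
    (by simpa using hσ)
  rw [Function.comp_apply, add_sub_add_right_eq_sub]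
  linear_combination (-(σ - 1 : ℂ) / 2) * hD

lemma heckeL_one_add_mul_I_ne_zero {t : ℝ} (ht : t ≠ 0) : heckeL (1 + t * Complex.I) ≠ 0 := by
  have hs : 1 ≤ (1 + t * Complex.I).re := by simp
  obtain ⟨K, hK, hKeq⟩ := exists_LSeries_splitLog_eq
  have hnonneg := three_mul_add_four_mul_re_nonneg abs_splitLog_mul_nagaoDeviation_le
    (fun _ ↦ LSeriesSummable_splitLog) hK hKeq ht
    (tendsto_sub_one_mul_LSeries_splitLog_mul_nagaoDeviation t)
  set m := analyticOrderNatAt heckeL (1 + t * Complex.I) with hm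
  have hreal : (3 * (1 / 2) + 4 * -(m / 2) : ℂ) = ((3 / 2 - 2 * m : ℝ) : ℂ) := by
    push_cast
    ring
  rw [hreal, Complex.ofReal_re] at hnonneg
  have hm1 : (m : ℝ) < 1 := by linarith
  rw [← (analyticAt_heckeL hs).analyticOrderAt_eq_zero,
    ← Nat.cast_analyticOrderNatAt (analyticOrderAt_heckeL_ne_top hs), ← hm, Nat.cast_eq_zero]
  exact Nat.lt_one_iff.1 (mod_cast hm1)

lemma heckeL_ne_zero {s : ℂ} (hs : 1 ≤ s.re) : heckeL s ≠ 0 := by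
  rcases hs.lt_or_eq with hlt | heq
  · exact heckeL_ne_zero_of_one_lt_re hlt
  · have hline : s = 1 + s.im * Complex.I := by simpa [← heq] using (Complex.re_add_im s).symm
    rw [hline]
    rcases eq_or_ne s.im 0 with him | him
    · simpa [him] using heckeL_one_ne_zero
    · exact heckeL_one_add_mul_I_ne_zero him

end Nonvanishing

section NagaoSum

lemma exists_LSeries_splitLog_mul_two_add_eq :
    ∃ H : ℂ → ℂ, ContinuousOn H {s | 1 ≤ s.re} ∧ ∀ s, 1 < s.re →
      LSeries (fun n ↦ ((splitLog n * (2 + 2 * nagaoDeviation n) : ℝ) : ℂ)) s =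
        (1 : ℝ) / (s - 1) + H s := by
  obtain ⟨K, hK, hKeq⟩ := exists_LSeries_splitLog_eq
  have hlog : ContinuousOn (logDeriv heckeL) {s | 1 ≤ s.re} := fun s hs ↦
    ((analyticAt_heckeL hs).deriv.continuousAt.div (analyticAt_heckeL hs).continuousAt
      (heckeL_ne_zero hs)).continuousWithinAt
  refine ⟨fun s ↦ 2 * K s - logDeriv heckeL s - logDerivRemainder s,
    ((continuousOn_const.mul hK).sub hlog).sub continuousOn_logDerivRemainder, fun s hs ↦ ?_⟩
  have hsplit : (fun n ↦ ((splitLog n * (2 + 2 * nagaoDeviation n) : ℝ) : ℂ)) =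
      (2 : ℂ) • (fun n ↦ (splitLog n : ℂ)) +
        (2 : ℂ) • fun n ↦ ((splitLog n * nagaoDeviation n : ℝ) : ℂ) := by
    ext n
    simp only [Pi.add_apply, Pi.smul_apply, smul_eq_mul]
    push_cast
    ring
  rw [hsplit, LSeries_add ((LSeriesSummable_splitLog hs).smul 2)
    ((LSeriesSummable_splitLog_mul_nagaoDeviation hs).smul 2), LSeries_smul, LSeries_smul,
    two_mul_LSeries_splitLog_mul_nagaoDeviation hs, hKeq s hs, Complex.ofReal_one]
  ring

lemma splitLog_mul_two_add_nonneg (n : ℕ) : 0 ≤ splitLog n * (2 + 2 * nagaoDeviation n) := by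
  linarith [(abs_le.1 (abs_splitLog_mul_nagaoDeviation_le n)).1]

lemma sum_splitLog_le (N : ℕ) : ∑ n ∈ Finset.Icc 1 N, splitLog n ≤ Real.log 4 * N := by
  refine le_trans ?_ (Chebyshev.theta_le_log4_mul_x N.cast_nonneg)
  rw [Chebyshev.theta, Nat.floor_natCast, Finset.sum_filter]
  refine Finset.sum_le_sum fun n _ ↦ ?_
  by_cases hn : n.Prime
  · rw [if_pos hn, ← ArithmeticFunction.vonMangoldt_apply_prime hn]
    exact splitLog_le_vonMangoldt n
  · simp [splitLog, hn]

lemma sum_splitLog_mul_two_add_le (N : ℕ) :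
    ∑ n ∈ Finset.Icc 1 N, splitLog n * (2 + 2 * nagaoDeviation n) ≤ 4 * Real.log 4 * N :=
  calc _ ≤ ∑ n ∈ Finset.Icc 1 N, 4 * splitLog n := Finset.sum_le_sum fun n _ ↦ by
        linarith [(abs_le.1 (abs_splitLog_mul_nagaoDeviation_le n)).2]
    _ = 4 * ∑ n ∈ Finset.Icc 1 N, splitLog n := (Finset.mul_sum ..).symm
    _ ≤ 4 * Real.log 4 * N := by linarith [sum_splitLog_le N]

lemma neg_nagaoAverage_mul_log {p : ℕ} (hp : p.Prime) (hp2 : p ≠ 2) :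
    -nagaoAverage p * Real.log p = splitLog p * (2 + 2 * nagaoDeviation p) := by
  have := Fact.mk hp
  by_cases hp4 : p % 4 = 1
  · rw [splitLog, if_pos ⟨hp, hp4⟩, nagaoDeviation]
    ring
  · have hp3 : p % 4 = 3 := by
      have := hp.eq_two_or_odd
      omega
    rw [splitLog, if_neg fun h ↦ hp4 h.2, neg_nagaoAverage_eq p hp2,
      jacobsthalSum_eq_zero (by rwa [ZMod.card])]
    simp

lemma sum_neg_nagaoAverage_mul_log (N : ℕ) :
    ∑ p ∈ Finset.range (N + 1) with p.Prime ∧ p ≠ 2, -nagaoAverage p * Real.log p =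
      ∑ n ∈ Finset.Icc 1 N, splitLog n * (2 + 2 * nagaoDeviation n) := by
  refine Finset.sum_subset_zero_on_sdiff (fun p hp ↦ ?_) (fun p hp ↦ ?_) fun p hp ↦ ?_
  · rw [Finset.mem_filter, Finset.mem_range_succ_iff] at hp
    exact Finset.mem_Icc.2 ⟨hp.2.1.one_le, hp.1⟩
  · rw [Finset.mem_sdiff, Finset.mem_Icc, Finset.mem_filter, Finset.mem_range_succ_iff] at hp
    have hsplit : ¬(p.Prime ∧ p % 4 = 1) := fun h ↦
      hp.2 ⟨hp.1.2, h.1, by rintro rfl; omega⟩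
    rw [splitLog, if_neg hsplit, zero_mul]
  · exact neg_nagaoAverage_mul_log (Finset.mem_filter.1 hp).2.1 (Finset.mem_filter.1 hp).2.2

end NagaoSum

/-- Nagao's limit formula holds for the elliptic surface
`𝓔 : y² = x³ + (T³ + T)² x`:
`lim_{N → ∞} (1/N) Σ_{odd primes p ≤ N} (−A_p(𝓔)) log p = 1`. -/
theorem nagao_conjecture_for_twist_of_CM_curve :
    Tendsto
      (fun N : ℕ => (1 / (N : ℝ)) *
        ∑ p ∈ Finset.range (N + 1) |>.filter (fun p => p.Prime ∧ p ≠ 2),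
          (-(nagaoAverage p)) * Real.log p)
      atTop (nhds 1) := by
  obtain ⟨H, hH, hHeq⟩ := exists_LSeries_splitLog_mul_two_add_eq
  have hlim := tendsto_sum_div_of_LSeries_eq splitLog_mul_two_add_nonneg
    sum_splitLog_mul_two_add_le hH hHeq
  refine hlim.congr fun N ↦ ?_
  rw [sum_neg_nagaoAverage_mul_log, one_div_mul_eq_div]
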